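/- arXiv:1007.2391 — 3 statements merged into one kernel-verified Lean document; each statement's English description precedes it below -/
import Mathlib

section
/- For every μ ∈ 𝓜(H) (H ⊂ ℂ^n compact, ν a positive Borel measure on H with ν(H) ≤ 1): J(μ) ≤ W(μ) ≤ inf{ δ̄^{e^{−Q}}(H) · exp(∫_H Q dμ) : Q : H → ℝ continuous }. -/
open MeasureTheory Filter Topology ENNReal

noncomputable section

/-- Points of `ℂⁿ` (with the Euclidean metric). -/
abbrev Pt (n : ℕ) := EuclideanSpace ℂ (Fin n)

instance Pt.measurableSpace (n : ℕ) : MeasurableSpace (Pt n) := borel _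

instance Pt.borelSpace (n : ℕ) : BorelSpace (Pt n) := ⟨rfl⟩

/-- `s(d) = binomial(d+n, n)`, the number of multi-indices `α ∈ ℕⁿ` with `|α| ≤ d`. -/
def sdim (n d : ℕ) : ℕ := (d + n).choose n

lemma sdim_pos (n d : ℕ) : 0 < sdim n d := Nat.choose_pos (Nat.le_add_left n d)

/-- `E` is an enumeration of the multi-indices `α ∈ ℕⁿ` with `|α| ≤ d`. -/
def IsEnum (n d : ℕ) (E : Fin (sdim n d) → (Fin n → ℕ)) : Prop :=
  Function.Injective E ∧ ∀ α : Fin n → ℕ, ((∑ i, α i) ≤ d ↔ α ∈ Set.range E)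

/-- The Vandermonde determinant `VDM_d(a_1, …, a_{s(d)}) = det [a_j^{α_i}]`. -/
def VDM (n d : ℕ) (E : Fin (sdim n d) → (Fin n → ℕ))
    (a : Fin (sdim n d) → Pt n) : ℂ :=
  Matrix.det (Matrix.of fun i j => ∏ k, (a j k) ^ (E i k))

/-- `|VDM_d^Q(a)| = |VDM_d(a)| · w(a_1)^d ⋯ w(a_s)^d` where `w = e^{-Q}`, as a member
of `ℝ≥0∞`. -/
def absVDMQ (n d : ℕ) (E : Fin (sdim n d) → (Fin n → ℕ)) (H : Set (Pt n)) (Q : H → ℝ)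
    (a : Fin (sdim n d) → H) : ℝ≥0∞ :=
  ENNReal.ofReal (‖VDM n d E (fun j => (a j : Pt n))‖ *
    ∏ j, Real.exp (-(d : ℝ) * Q (a j)))

/-- The empirical measure `(1/s) ∑_j δ_{a_j}` of a tuple of points. -/
def emp {X : Type*} [MeasurableSpace X] {s : ℕ} (a : Fin s → X) : Measure X :=
  ((s : ℝ≥0∞))⁻¹ • ∑ j, Measure.dirac (a j)

lemma emp_univ {X : Type*} [MeasurableSpace X] {s : ℕ} (hs : s ≠ 0) (a : Fin s → X) :
    emp a Set.univ = 1 := by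
  have : (emp a) Set.univ = ((s : ℝ≥0∞))⁻¹ * ∑ j : Fin s, (Measure.dirac (a j)) Set.univ := by
    simp [emp, Measure.smul_apply, Measure.finset_sum_apply]
  rw [this]
  simp only [measure_univ, Finset.sum_const, Finset.card_univ, Fintype.card_fin, nsmul_eq_mul,
    mul_one]
  exact ENNReal.inv_mul_cancel (by exact_mod_cast hs) (by simp)

/-- The empirical probability measure `(1/s) ∑_j δ_{a_j}` of a tuple of points. -/
def empPM {X : Type*} [MeasurableSpace X] {s : ℕ} (hs : s ≠ 0) (a : Fin s → X) :
    ProbabilityMeasure X := ⟨emp a, ⟨emp_univ hs a⟩⟩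

/-- `G̃_s(μ)`: the tuples in `H^s` whose empirical measure lies in `G`. -/
def Gtilde {n : ℕ} (d : ℕ) (H : Set (Pt n)) (G : Set (ProbabilityMeasure H)) :
    Set (Fin (sdim n d) → H) :=
  {a | empPM (sdim_pos n d).ne' a ∈ G}

/-- `J_d^Q(μ, G) = (∫_{G̃_s(μ)} |VDM_d^Q(a)|² dν^{⊗s}(a))^{1/(2ds)}`. -/
def Jd (n d : ℕ) (E : Fin (sdim n d) → (Fin n → ℕ)) (H : Set (Pt n)) (ν : Measure H)
    (Q : H → ℝ) (G : Set (ProbabilityMeasure H)) : ℝ≥0∞ :=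
  (∫⁻ a in Gtilde d H G, (absVDMQ n d E H Q a) ^ 2
      ∂(Measure.pi fun _ : Fin (sdim n d) => ν)) ^ (1 / (2 * d * sdim n d) : ℝ)

/-- `W_d^Q(μ, G) = sup { |VDM_d^Q(a)|^{1/(ds)} : a ∈ G̃_s(μ) }`. -/
def Wd (n d : ℕ) (E : Fin (sdim n d) → (Fin n → ℕ)) (H : Set (Pt n))
    (Q : H → ℝ) (G : Set (ProbabilityMeasure H)) : ℝ≥0∞ :=
  ⨆ a ∈ Gtilde d H G, (absVDMQ n d E H Q a) ^ (1 / (d * sdim n d) : ℝ)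

/-- `J^Q(μ) = inf_{G ∋ μ} limsup_{d → ∞} J_d^Q(μ, G)`, the infimum being over all open
neighborhoods `G` of `μ` in `𝓜(H)`. -/
def JQ (n : ℕ) (E : ∀ d, Fin (sdim n d) → (Fin n → ℕ)) (H : Set (Pt n)) (ν : Measure H)
    (Q : H → ℝ) (μ : ProbabilityMeasure H) : ℝ≥0∞ :=
  ⨅ G ∈ {G : Set (ProbabilityMeasure H) | IsOpen G ∧ μ ∈ G},
    limsup (fun d => Jd n d (E d) H ν Q G) atTop

/-- `W^Q(μ) = inf_{G ∋ μ} limsup_{d → ∞} W_d^Q(μ, G)`, the infimum being over all open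
neighborhoods `G` of `μ` in `𝓜(H)`. -/
def WQ (n : ℕ) (E : ∀ d, Fin (sdim n d) → (Fin n → ℕ)) (H : Set (Pt n))
    (Q : H → ℝ) (μ : ProbabilityMeasure H) : ℝ≥0∞ :=
  ⨅ G ∈ {G : Set (ProbabilityMeasure H) | IsOpen G ∧ μ ∈ G},
    limsup (fun d => Wd n d (E d) H Q G) atTop

/-- `δ̄^w(H) = lim sup_d (sup_{a ∈ H^{s(d)}} |VDM_d^Q(a)|)^{1/(d·s(d))}` where `w = e^{-Q}`. -/
def deltaBar (n : ℕ) (E : ∀ d, Fin (sdim n d) → (Fin n → ℕ)) (H : Set (Pt n))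
    (Q : H → ℝ) : ℝ≥0∞ :=
  limsup (fun d => (⨆ a : Fin (sdim n d) → H, absVDMQ n d (E d) H Q a)
    ^ (1 / (d * sdim n d) : ℝ)) atTop

/-- The density condition on `(H, ν)`: there is `T > 0` such that for every `z₀ ∈ H`
there is `r(z₀) > 0` with `ν(B(z₀,r)) ≥ r^T` for all `0 < r < r(z₀)`. -/
def DensityCond {n : ℕ} (H : Set (Pt n)) (ν : Measure H) : Prop :=
  ∃ T : ℝ, 0 < T ∧ ∀ z₀ : H, ∃ r₀ > 0, ∀ r : ℝ, 0 < r → r < r₀ →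
    ENNReal.ofReal (r ^ T) ≤ ν (Metric.ball z₀ r)

/-!
Raising `|VDM_d^Q|` to the power `1 / (d s)` turns the factor `w(a₁)^d ⋯ w(a_s)^d` into
`exp (-∫ Q dσ)`, where `σ` is the empirical measure of `a`. On the neighborhood `{σ | ∫ Q dσ < c}`
of `μ` the integral is controlled by `c`, which may be taken arbitrarily close to `∫ Q dμ`; this
bounds `W`. The bound `J ≤ W` compares an `L²` norm with a supremum, up to the factor
`ν(H)^{1 / (2d)}`, which is at most `max(1, ν(H))^{1 / (2d)}` and so asymptotically at most `1`.
-/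

lemma setLIntegral_rpow_le_iSup_mul {α : Type*} [MeasurableSpace α] (μ : Measure α) (s : Set α)
    (f : α → ℝ≥0∞) {p : ℝ} (hp : 0 < p) :
    (∫⁻ a in s, f a ^ p ∂μ) ^ (1 / p) ≤ (⨆ a ∈ s, f a) * μ s ^ (1 / p) := by
  have hint : ∫⁻ a in s, f a ^ p ∂μ ≤ (⨆ a ∈ s, f a) ^ p * μ s := by
    rw [← setLIntegral_const]
    exact setLIntegral_mono measurable_const fun a ha =>
      ENNReal.rpow_le_rpow (le_iSup₂ (f := fun a (_ : a ∈ s) => f a) a ha) hp.le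
  calc (∫⁻ a in s, f a ^ p ∂μ) ^ (1 / p)
      ≤ ((⨆ a ∈ s, f a) ^ p * μ s) ^ (1 / p) := ENNReal.rpow_le_rpow hint (by positivity)
    _ = (⨆ a ∈ s, f a) * μ s ^ (1 / p) := by
      rw [ENNReal.mul_rpow_of_nonneg _ _ (by positivity), one_div, ENNReal.rpow_rpow_inv hp.ne']

lemma tendsto_ennreal_const_rpow {ι : Type*} {l : Filter ι} {u : ι → ℝ} {x : ℝ} {c : ℝ≥0∞}
    (hc₀ : c ≠ 0) (hc : c ≠ ∞) (hu : Tendsto u l (𝓝 x)) :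
    Tendsto (fun i => c ^ u i) l (𝓝 (c ^ x)) := by
  lift c to NNReal using hc
  have hc₀ : c ≠ 0 := by exact_mod_cast hc₀
  simp only [← ENNReal.coe_rpow_of_ne_zero hc₀]
  exact ENNReal.tendsto_coe.mpr (tendsto_const_nhds.nnrpow hu (Or.inl hc₀))

lemma limsup_mul_le_of_tendsto_one {ι : Type*} {l : Filter ι} [l.NeBot] {u v : ι → ℝ≥0∞}
    (hv : Tendsto v l (𝓝 1)) : limsup (u * v) l ≤ limsup u l := by
  have hlim : limsup v l = 1 := hv.limsup_eq
  simpa [hlim] using ENNReal.limsup_mul_le' (u := u) (v := v) (f := l) (by simp [hlim])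
    (by simp [hlim])

lemma integral_emp {X F : Type*} [MeasurableSpace X] [NormedAddCommGroup F] [NormedSpace ℝ F]
    [CompleteSpace F] {s : ℕ} (a : Fin s → X) {f : X → F} (hf : StronglyMeasurable f) :
    ∫ z, f z ∂emp a = (s : ℝ)⁻¹ • ∑ j, f (a j) := by
  rw [emp, integral_smul_measure, integral_finsetSum_measure fun j _ =>
    integrable_dirac' hf (by simp)]
  simp [integral_dirac' _ _ hf]

section VandermondeBounds

variable {n d : ℕ} (E : Fin (sdim n d) → (Fin n → ℕ)) {H : Set (Pt n)}

lemma Jd_le_Wd_mul (hd : d ≠ 0) (ν : Measure H) [IsFiniteMeasure ν] (Q : H → ℝ)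
    (G : Set (ProbabilityMeasure H)) :
    Jd n d E H ν Q G ≤ Wd n d E H Q G * ν Set.univ ^ (1 / (2 * d) : ℝ) := by
  have hd' : (d : ℝ) ≠ 0 := by exact_mod_cast hd
  have hs : (sdim n d : ℝ) ≠ 0 := by exact_mod_cast (sdim_pos n d).ne'
  have hsq (a : Fin (sdim n d) → H) : absVDMQ n d E H Q a ^ 2 =
      (absVDMQ n d E H Q a ^ (1 / (d * sdim n d) : ℝ)) ^ (2 * d * sdim n d : ℝ) := by
    rw [← ENNReal.rpow_mul, ← ENNReal.rpow_natCast]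
    congr 1
    field_simp
    norm_num
  have hmass : Measure.pi (fun _ : Fin (sdim n d) => ν) (Gtilde d H G) ≤
      ν Set.univ ^ sdim n d :=
    (measure_mono (Set.subset_univ _)).trans (by simp [Measure.pi_univ])
  simp only [Jd, hsq]
  refine (setLIntegral_rpow_le_iSup_mul _ _ _ (by positivity)).trans
    (mul_le_mul_right ?_ (Wd n d E H Q G))
  calc Measure.pi (fun _ : Fin (sdim n d) => ν) (Gtilde d H G) ^ (1 / (2 * d * sdim n d) : ℝ)
      ≤ (ν Set.univ ^ sdim n d) ^ (1 / (2 * d * sdim n d) : ℝ) :=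
        ENNReal.rpow_le_rpow hmass (by positivity)
    _ = ν Set.univ ^ (1 / (2 * d) : ℝ) := by
      rw [← ENNReal.rpow_natCast, ← ENNReal.rpow_mul]
      congr 1
      field_simp

lemma absVDMQ_eq_exp_mul_absVDMQ_add (Q R : H → ℝ) (a : Fin (sdim n d) → H) :
    absVDMQ n d E H Q a =
      ENNReal.ofReal (Real.exp (d * ∑ j, R (a j))) * absVDMQ n d E H (Q + R) a := by
  rw [absVDMQ, absVDMQ, ← ENNReal.ofReal_mul (Real.exp_nonneg _), mul_left_comm,
    ← Real.exp_sum, ← Real.exp_sum, ← Real.exp_add]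
  simp only [Pi.add_apply, ← Finset.mul_sum, Finset.sum_add_distrib]
  ring_nf

lemma absVDMQ_rpow_eq_exp_integral_emp_mul (hd : d ≠ 0) (Q : H → ℝ) {R : H → ℝ}
    (hR : StronglyMeasurable R) (a : Fin (sdim n d) → H) :
    absVDMQ n d E H Q a ^ (1 / (d * sdim n d) : ℝ) =
      ENNReal.ofReal (Real.exp (∫ z, R z ∂emp a)) *
        absVDMQ n d E H (Q + R) a ^ (1 / (d * sdim n d) : ℝ) := by
  have hd' : (d : ℝ) ≠ 0 := by exact_mod_cast hd
  have hs : (sdim n d : ℝ) ≠ 0 := by exact_mod_cast (sdim_pos n d).ne'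
  rw [absVDMQ_eq_exp_mul_absVDMQ_add E Q R, ENNReal.mul_rpow_of_nonneg _ _ (by positivity),
    ENNReal.ofReal_rpow_of_pos (Real.exp_pos _), ← Real.exp_mul, integral_emp a hR, smul_eq_mul]
  congr 3
  field_simp

lemma Wd_le_exp_mul_iSup (hd : d ≠ 0) (Q : H → ℝ) {R : H → ℝ} (hR : StronglyMeasurable R)
    {G : Set (ProbabilityMeasure H)} {c : ℝ} (hG : ∀ σ ∈ G, ∫ z, R z ∂(σ : Measure H) ≤ c) :
    Wd n d E H Q G ≤ ENNReal.ofReal (Real.exp c) *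
      (⨆ a : Fin (sdim n d) → H, absVDMQ n d E H (Q + R) a) ^ (1 / (d * sdim n d) : ℝ) := by
  refine iSup₂_le fun a ha => ?_
  have hint : ∫ z, R z ∂emp a ≤ c := hG _ ha
  rw [absVDMQ_rpow_eq_exp_integral_emp_mul E hd Q hR]
  gcongr
  exact le_iSup (absVDMQ n d E H (Q + R)) a

end VandermondeBounds

section Limits

open scoped BoundedContinuousFunction

variable {n : ℕ} (E : ∀ d, Fin (sdim n d) → (Fin n → ℕ)) {H : Set (Pt n)}

lemma JQ_le_WQ (ν : Measure H) [IsFiniteMeasure ν] (Q : H → ℝ) (μ : ProbabilityMeasure H) :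
    JQ n E H ν Q μ ≤ WQ n E H Q μ := by
  -- The maximum with `1` covers `ν = 0`, for which `ν(H)^{1 / (2d)}` does not tend to `1`.
  have hmass : Tendsto (fun d : ℕ => max 1 (ν Set.univ) ^ (1 / (2 * d) : ℝ)) atTop (𝓝 1) := by
    have hexp : Tendsto (fun d : ℕ => 1 / (2 * d : ℝ)) atTop (𝓝 0) :=
      tendsto_const_nhds.div_atTop
        (tendsto_natCast_atTop_atTop.const_mul_atTop (two_pos : (0 : ℝ) < 2))
    simpa using tendsto_ennreal_const_rpow (by simp) (by simp) hexp
  refine iInf₂_mono fun G _ =>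
    le_trans (limsup_le_limsup ?_) (limsup_mul_le_of_tendsto_one hmass)
  filter_upwards [eventually_ne_atTop 0] with d hd
  refine (Jd_le_Wd_mul (E d) hd ν Q G).trans ?_
  simp only [Pi.mul_apply]
  gcongr
  exact le_max_right _ _

lemma WQ_le_deltaBar_mul_exp_of_integral_lt (Q : H → ℝ) (R : H →ᵇ ℝ) {μ : ProbabilityMeasure H}
    {c : ℝ} (hc : ∫ z, R z ∂(μ : Measure H) < c) :
    WQ n E H Q μ ≤ deltaBar n E H (Q + R) * ENNReal.ofReal (Real.exp c) := by
  have hopen : IsOpen {σ : ProbabilityMeasure H | ∫ z, R z ∂(σ : Measure H) < c} :=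
    isOpen_lt (ProbabilityMeasure.continuous_integral_boundedContinuousFunction R)
      continuous_const
  refine (iInf₂_le _ ⟨hopen, hc⟩).trans ?_
  rw [mul_comm, deltaBar, ← ENNReal.limsup_const_mul_of_ne_top ENNReal.ofReal_ne_top]
  refine limsup_le_limsup ?_
  filter_upwards [eventually_ne_atTop 0] with d hd
  exact Wd_le_exp_mul_iSup (E d) hd Q R.continuous.stronglyMeasurable fun σ hσ => le_of_lt hσ

lemma WQ_le_deltaBar_mul_exp_integral (Q : H → ℝ) (R : H →ᵇ ℝ) (μ : ProbabilityMeasure H) :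
    WQ n E H Q μ ≤
      deltaBar n E H (Q + R) * ENNReal.ofReal (Real.exp (∫ z, R z ∂(μ : Measure H))) := by
  set m := ∫ z, R z ∂(μ : Measure H)
  have hexp : Tendsto (fun c => ENNReal.ofReal (Real.exp c)) (𝓝[>] m)
      (𝓝 (ENNReal.ofReal (Real.exp m))) :=
    ((ENNReal.continuous_ofReal.comp Real.continuous_exp).tendsto m).mono_left nhdsWithin_le_nhds
  refine ge_of_tendsto (ENNReal.Tendsto.const_mul hexp (Or.inl (by simp [Real.exp_pos]))) ?_
  filter_upwards [self_mem_nhdsWithin] with c hc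
  exact WQ_le_deltaBar_mul_exp_of_integral_lt E Q R hc

end Limits

open scoped BoundedContinuousFunction in
theorem J_le_W_le_inf_weighted_transfinite_general
    (n : ℕ) (E : ∀ d, Fin (sdim n d) → (Fin n → ℕ)) (_hE : ∀ d, IsEnum n d (E d))
    (H : Set (Pt n)) (ν : Measure H) [IsFiniteMeasure ν] (Q : H → ℝ)
    (μ : ProbabilityMeasure H) :
    JQ n E H ν Q μ ≤ WQ n E H Q μ ∧
    WQ n E H Q μ ≤
      ⨅ R : H →ᵇ ℝ,
        deltaBar n E H (Q + R) * ENNReal.ofReal (Real.exp (∫ z, R z ∂(μ : Measure H))) :=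
  ⟨JQ_le_WQ E ν Q μ, le_iInf fun R => WQ_le_deltaBar_mul_exp_integral E Q R μ⟩

/-- **Proposition (upper bound).** For every `μ ∈ 𝓜(H)` (`H ⊂ ℂⁿ` compact, `ν` a positive
Borel measure on `H` with `ν(H) ≤ 1`):
`J(μ) ≤ W(μ) ≤ inf { δ̄^{e^{-Q}}(H) · exp(∫_H Q dμ) : Q : H → ℝ continuous }`. -/
theorem J_le_W_le_inf_weighted_transfinite
    (n : ℕ) (hn : 1 ≤ n)
    (E : ∀ d, Fin (sdim n d) → (Fin n → ℕ)) (hE : ∀ d, IsEnum n d (E d))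
    (H : Set (Pt n)) (hHcomp : IsCompact H)
    (ν : Measure H) (hν : ν Set.univ ≤ 1)
    (μ : ProbabilityMeasure H) :
    JQ n E H ν 0 μ ≤ WQ n E H 0 μ ∧
    WQ n E H 0 μ ≤
      ⨅ (Q : H → ℝ) (_ : Continuous Q),
        deltaBar n E H Q * ENNReal.ofReal (Real.exp (∫ z, Q z ∂(μ : Measure H))) := by
  have : CompactSpace H := isCompact_iff_compactSpace.mp hHcomp
  have : IsFiniteMeasure ν := ⟨hν.trans_lt ENNReal.one_lt_top⟩
  obtain ⟨hJW, hW⟩ := J_le_W_le_inf_weighted_transfinite_general n E hE H ν 0 μ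
  refine ⟨hJW, le_iInf₂ fun Q hQ => hW.trans ?_⟩
  exact iInf_le_of_le (BoundedContinuousFunction.mkOfCompact ⟨Q, hQ⟩) (by rw [zero_add]; rfl)

end
end

section
/- Let N ≥ 1 and let H ⊂ ℝ^N be a compact convex set satisfying the Markov–Lipschitz inequality with constant M > 0. Let d, s ≥ 1 be integers, α, β > 0, and let Λ : (ℝ^N)^s → ℝ be a polynomial in the Ns real variables that is nonnegative on H^s and such that for each j ∈ {1,…,s} and each fixed choice of the other s−1 coordinate blocks, the function t ↦ Λ(a_1,…,a_{j−1},t,a_{j+1},…,a_s) of t ∈ ℝ^N is a polynomial of degree at most α d^β. If a* = (a*_1,…,a*_s) ∈ H^s satisfies Λ(a*) = max_{a ∈ H^s} Λ(a), then for every a = (a_1,…,a_s) ∈ H^s with |a_j − a*_j| ≤ e^{−√d} for all j = 1,…,s, one has Λ(a) ≥ Λ(a*) · (1 − s M α^2 d^{2β} e^{−√d}). -/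
/-!
Move from `a*` to `a` one block at a time, staying in `H^s`. As a function of the moving block, `Λ`
is a polynomial whose values on `H` lie in `[0, Λ(a*)]`, so by Markov–Lipschitz each move costs at
most `M (deg)² Λ(a*) |a_j - a*_j|`.
-/

open Filter

noncomputable section

/-- Points of `ℝ^N` with the Euclidean metric. -/
abbrev RPt (N : ℕ) := EuclideanSpace ℝ (Fin N)

/-- `H ⊂ ℝ^N` satisfies the Markov–Lipschitz inequality with constant `M`:
`|p(x) - p(y)| ≤ M (deg p)² (sup_H |p|) |x - y|` for all real polynomials `p` in `N`
variables and all `x, y ∈ H`. -/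
def MarkovLip (N : ℕ) (H : Set (RPt N)) (M : ℝ) : Prop :=
  ∀ p : MvPolynomial (Fin N) ℝ, ∀ x ∈ H, ∀ y ∈ H,
    |MvPolynomial.eval (fun i => x i) p - MvPolynomial.eval (fun i => y i) p| ≤
      M * (p.totalDegree : ℝ) ^ 2 *
        sSup ((fun z : RPt N => |MvPolynomial.eval (fun i => z i) p|) '' H) * dist x y

theorem sub_le_sum_of_update_sub_update_le {ι G : Type*} [Fintype ι] [DecidableEq ι]
    {E : ι → Type*} [AddCommGroup G] [PartialOrder G] [IsOrderedAddMonoid G]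
    {f : (∀ i, E i) → G} {H : ∀ i, Set (E i)} {x y : ∀ i, E i} {c : ι → G}
    (hx : x ∈ Set.univ.pi H) (hy : y ∈ Set.univ.pi H)
    (hf : ∀ j, ∀ b ∈ Set.univ.pi H,
      f (Function.update b j (x j)) - f (Function.update b j (y j)) ≤ c j) :
    f x - f y ≤ ∑ j, c j := by
  suffices partial_bound : ∀ S : Finset ι, f x - f (S.piecewise y x) ≤ ∑ j ∈ S, c j by
    simpa only [Finset.piecewise_univ] using partial_bound Finset.univ
  intro S
  induction S using Finset.induction_on with
  | empty => simp
  | insert j S hj ih =>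
    have move_block := hf j (S.piecewise y x) (S.piecewise_mem_set_pi hy hx)
    rw [← S.piecewise_eq_of_notMem y x hj, Function.update_eq_self] at move_block
    rw [Finset.piecewise_insert, Finset.sum_insert hj, add_comm,
      ← sub_add_sub_cancel (f x) (f (S.piecewise y x))]
    exact add_le_add ih move_block

theorem MarkovLip.abs_eval_sub_eval_le {N : ℕ} {H : Set (RPt N)} {M D B : ℝ}
    (hML : MarkovLip N H M) (hM : 0 ≤ M) {p : MvPolynomial (Fin N) ℝ}
    (hdeg : (p.totalDegree : ℝ) ≤ D)
    (hbound : ∀ z ∈ H, |MvPolynomial.eval (fun i => z i) p| ≤ B)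
    {x y : RPt N} (hx : x ∈ H) (hy : y ∈ H) :
    |MvPolynomial.eval (fun i => x i) p - MvPolynomial.eval (fun i => y i) p| ≤
      M * D ^ 2 * B * dist x y := by
  have sup_le : sSup ((fun z : RPt N => |MvPolynomial.eval (fun i => z i) p|) '' H) ≤ B :=
    csSup_le ⟨_, Set.mem_image_of_mem _ hx⟩ (Set.forall_mem_image.2 hbound)
  have sup_nonneg : 0 ≤ sSup ((fun z : RPt N => |MvPolynomial.eval (fun i => z i) p|) '' H) :=
    Real.sSup_nonneg (Set.forall_mem_image.2 fun _ _ => abs_nonneg _)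
  exact (hML p x hx y hy).trans (by gcongr)

/-- `Λ` is, in each block of `N` variables separately, a polynomial of total degree at most `D`.
This is the degree condition on each block of the theorem; `D` is real to allow bounds such as
`α d ^ β`. -/
def BlockDegreeLE {ι : Type*} [DecidableEq ι] {N : ℕ} (Λ : (ι → RPt N) → ℝ) (D : ℝ) : Prop :=
  ∀ (j : ι) (a : ι → RPt N), ∃ q : MvPolynomial (Fin N) ℝ,
    (q.totalDegree : ℝ) ≤ D ∧
      ∀ t : RPt N, Λ (Function.update a j t) = MvPolynomial.eval (fun i => t i) q

section Blocks

variable {ι : Type*} [DecidableEq ι] {N : ℕ} {H : Set (RPt N)} {M D B : ℝ}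
  {Λ : (ι → RPt N) → ℝ}

theorem BlockDegreeLE.abs_update_sub_update_le (hdeg : BlockDegreeLE Λ D)
    (hML : MarkovLip N H M) (hM : 0 ≤ M) (hbound : ∀ a : ι → RPt N, (∀ j, a j ∈ H) → |Λ a| ≤ B)
    {b : ι → RPt N} (hb : ∀ j, b j ∈ H) (j : ι) {x y : RPt N} (hx : x ∈ H) (hy : y ∈ H) :
    |Λ (Function.update b j x) - Λ (Function.update b j y)| ≤ M * D ^ 2 * B * dist x y := by
  obtain ⟨q, hqdeg, hq⟩ := hdeg j b
  have block_bound (z : RPt N) (hz : z ∈ H) : |MvPolynomial.eval (fun i => z i) q| ≤ B := by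
    rw [← hq]
    exact hbound _ ((Function.forall_update_iff b fun _ t => t ∈ H).2 ⟨hz, fun i _ => hb i⟩)
  rw [hq, hq]
  exact hML.abs_eval_sub_eval_le hM hqdeg block_bound hx hy

theorem BlockDegreeLE.sub_le_mul_sum_dist [Fintype ι] (hdeg : BlockDegreeLE Λ D)
    (hML : MarkovLip N H M) (hM : 0 ≤ M) (hbound : ∀ a : ι → RPt N, (∀ j, a j ∈ H) → |Λ a| ≤ B)
    {x y : ι → RPt N} (hx : ∀ j, x j ∈ H) (hy : ∀ j, y j ∈ H) :
    Λ x - Λ y ≤ M * D ^ 2 * B * ∑ j, dist (x j) (y j) := by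
  rw [Finset.mul_sum]
  refine sub_le_sum_of_update_sub_update_le (H := fun _ => H) (fun j _ => hx j) (fun j _ => hy j)
    fun j b hb => (le_abs_self _).trans ?_
  exact hdeg.abs_update_sub_update_le hML hM hbound (fun i => hb i (Set.mem_univ i)) j
    (hx j) (hy j)

theorem nonneg_poly_lower_bound_near_max_general [Fintype ι] (hML : MarkovLip N H M) (hM : 0 ≤ M)
    (hdeg : BlockDegreeLE Λ D) (hnonneg : ∀ a : ι → RPt N, (∀ j, a j ∈ H) → 0 ≤ Λ a)
    {astar : ι → RPt N} (hastar : ∀ j, astar j ∈ H)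
    (hmax : ∀ a : ι → RPt N, (∀ j, a j ∈ H) → Λ a ≤ Λ astar)
    {a : ι → RPt N} (ha : ∀ j, a j ∈ H) {δ : ℝ} (hclose : ∀ j, dist (a j) (astar j) ≤ δ) :
    Λ astar * (1 - Fintype.card ι * M * D ^ 2 * δ) ≤ Λ a := by
  have hbound (b : ι → RPt N) (hb : ∀ j, b j ∈ H) : |Λ b| ≤ Λ astar :=
    (abs_of_nonneg (hnonneg b hb)).trans_le (hmax b hb)
  have max_nonneg : 0 ≤ Λ astar := hnonneg astar hastar
  have sum_dist_le : ∑ j, dist (astar j) (a j) ≤ Fintype.card ι * δ := by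
    simpa only [dist_comm, nsmul_eq_mul, Finset.card_univ] using
      Finset.sum_le_card_nsmul Finset.univ _ δ fun j _ => hclose j
  have drop_le : Λ astar - Λ a ≤ M * D ^ 2 * Λ astar * (Fintype.card ι * δ) :=
    (hdeg.sub_le_mul_sum_dist hML hM hbound hastar ha).trans (by gcongr)
  linarith

end Blocks

/-- **Lemma (nonnegative polynomials near a maximizer).** Let `H ⊂ ℝ^N` be compact convex
satisfying the Markov–Lipschitz inequality with constant `M > 0`. Let `Λ` be a polynomial in
the `Ns` real variables, nonnegative on `H^s`, of degree at most `α d^β` in each block of `N`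
variables. If `a*` maximizes `Λ` over `H^s`, then for every `a ∈ H^s` with
`|a_j - a*_j| ≤ e^{-√d}` for all `j`, one has `Λ(a) ≥ Λ(a*)(1 - s M α² d^{2β} e^{-√d})`. -/
theorem nonneg_poly_lower_bound_near_max
    {N : ℕ} (hN : 1 ≤ N) (H : Set (RPt N)) (hHcomp : IsCompact H) (hHconv : Convex ℝ H)
    (M : ℝ) (hM : 0 < M) (hML : MarkovLip N H M)
    (d s : ℕ) (hd : 1 ≤ d) (hs : 1 ≤ s) (α β : ℝ) (hα : 0 < α) (hβ : 0 < β)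
    (P : MvPolynomial (Fin s × Fin N) ℝ)
    (Λ : (Fin s → RPt N) → ℝ)
    (hΛ : ∀ a : Fin s → RPt N, Λ a = MvPolynomial.eval (fun q => a q.1 q.2) P)
    (hnonneg : ∀ a : Fin s → RPt N, (∀ j, a j ∈ H) → 0 ≤ Λ a)
    (hdeg : ∀ (j : Fin s) (a : Fin s → RPt N), ∃ q : MvPolynomial (Fin N) ℝ,
      (q.totalDegree : ℝ) ≤ α * (d : ℝ) ^ β ∧
      ∀ t : RPt N, Λ (Function.update a j t) = MvPolynomial.eval (fun i => t i) q)
    (astar : Fin s → RPt N) (hastar : ∀ j, astar j ∈ H)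
    (hmax : ∀ a : Fin s → RPt N, (∀ j, a j ∈ H) → Λ a ≤ Λ astar)
    (a : Fin s → RPt N) (ha : ∀ j, a j ∈ H)
    (hclose : ∀ j, dist (a j) (astar j) ≤ Real.exp (-Real.sqrt d)) :
    Λ astar * (1 - s * M * α ^ 2 * (d : ℝ) ^ (2 * β) * Real.exp (-Real.sqrt d)) ≤ Λ a := by
  have degree_sq : (α * (d : ℝ) ^ β) ^ 2 = α ^ 2 * (d : ℝ) ^ (2 * β) := by
    rw [mul_pow, mul_comm 2 β, ← Real.rpow_mul_natCast d.cast_nonneg, Nat.cast_ofNat]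
  simpa only [Fintype.card_fin, degree_sq, ← mul_assoc] using
    nonneg_poly_lower_bound_near_max_general hML hM.le hdeg hnonneg hastar hmax ha hclose

end
end

section
/- Let H ⊂ ℂ^n be a compact convex set with nonempty interior and let ν_1, ν_2 be two positive Borel measures on H, each of total mass at most 1 and each satisfying the density condition with H. Then for every μ ∈ 𝓜(H), the functional J(μ) computed using ν = ν_1 equals the functional J(μ) computed using ν = ν_2 (both equal W(μ), whose definition does not involve ν). -/
open MeasureTheory Filter Topology ENNReal

noncomputable section

/-!
On a compact convex body `K`, Remez's inequality on segments shows that a polynomial of degree `d`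
which is at most `N` off a set of small Lebesgue measure is at most `N * exp (ε * d)` on `K`. The
density condition holds uniformly, with one exponent and one radius, off a set of arbitrarily small
Lebesgue measure, so `|g|` comes within a factor `exp (ε * d)` of its maximum at a point where `ν`
charges all small balls; Markov's inequality keeps `|g|` large on such a ball. Hence
`exp (-(ε * d)) * max |g| ≤ ∫ |g| ∂ν` for large `d`, and the same holds locally.

The square `‖VDM‖ ^ 2` is polynomial on lines in each of its points. Applying the local bound to one
point after the other and using Fubini, `‖VDM‖ ^ 2` at a tuple is at most `exp (ε * d * s(d))` times
its integral over the tuples nearby. The empirical measures of these are close for the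
Lévy-Prokhorov metric, so the suprema defining `W` are controlled by the integrals defining `J`.
-/

section Remez

open Polynomial Polynomial.Chebyshev

lemma eval_eq_sum_mul_prod_div {K ι : Type*} [Field K] [DecidableEq ι] {s : Finset ι} {x : ι → K}
    (hx : Set.InjOn x s) {P : K[X]} (hP : P.degree < s.card) (t : K) :
    P.eval t = ∑ i ∈ s, P.eval (x i) * ∏ j ∈ s.erase i, (t - x j) / (x i - x j) := by
  conv_lhs => rw [Lagrange.eq_interpolate hx hP, Lagrange.interpolate_apply, eval_finsetSum]
  refine Finset.sum_congr rfl fun i _ => ?_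
  simp [Lagrange.basis, Lagrange.basisDivisor, eval_prod, div_eq_inv_mul]

lemma degree_lt_card_range_succ {R : Type*} [Semiring R] {P : R[X]} {n : ℕ}
    (hP : P.natDegree ≤ n) : P.degree < (Finset.range (n + 1)).card := by
  rw [Finset.card_range]
  exact degree_le_natDegree.trans_lt (by exact_mod_cast Nat.lt_succ_of_le hP)

lemma chebyshev_T_eval_eq_sum_prod_div_abs (n : ℕ) (c : ℝ) :
    (T ℝ n).eval c = ∑ i ∈ Finset.range (n + 1),
      ∏ j ∈ (Finset.range (n + 1)).erase i, (c - node n j) / |node n i - node n j| := by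
  have hdeg : (T ℝ n).natDegree ≤ n := by simp
  rw [eval_eq_sum_mul_prod_div (strictAntiOn_node n).injOn (degree_lt_card_range_succ hdeg)]
  refine Finset.sum_congr rfl fun i hi => ?_
  have hsign := zero_lt_prod_node_sub_node (Finset.mem_range_succ_iff.mp hi)
  rw [eval_T_real_node (by simpa [Nat.lt_succ_iff] using hi), Finset.prod_div_distrib,
    Finset.prod_div_distrib, ← Finset.abs_prod]
  have habs : |∏ j ∈ (Finset.range (n + 1)).erase i, (node n i - node n j)| =
      (-1) ^ i * ∏ j ∈ (Finset.range (n + 1)).erase i, (node n i - node n j) := by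
    rw [← abs_of_pos hsign, abs_mul, abs_pow, abs_neg, abs_one, one_pow, one_mul]
  rw [habs]
  rcases neg_one_pow_eq_or ℝ i with h | h <;> rw [h] <;> simp [div_neg]

lemma abs_eval_le_mul_chebyshev_T_of_node_comparison {n : ℕ} {P : ℝ[X]} (hP : P.natDegree ≤ n)
    {x : ℕ → ℝ} {c κ t N : ℝ} (hκ : 0 < κ) (hN : 0 ≤ N)
    (hsep : ∀ i ≤ n, ∀ j ≤ n, κ * |node n i - node n j| ≤ |x i - x j|)
    (hdist : ∀ j ≤ n, |t - x j| ≤ κ * (c - node n j))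
    (hPx : ∀ i ≤ n, |P.eval (x i)| ≤ N) : |P.eval t| ≤ N * (T ℝ n).eval c := by
  have hne : ∀ i ≤ n, ∀ j ≤ n, j ≠ i → 0 < |node n i - node n j| := fun i hi j hj hji =>
    abs_pos.mpr <| sub_ne_zero.mpr fun h => hji <| (strictAntiOn_node n).injOn
      (by simpa [Nat.lt_succ_iff] using hj) (by simpa [Nat.lt_succ_iff] using hi) h.symm
  have hinj : Set.InjOn x (Finset.range (n + 1)) := by
    intro i hi j hj hij
    simp only [Finset.coe_range, Set.mem_Iio, Nat.lt_succ_iff] at hi hj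
    by_contra hne'
    have h := hsep i hi j hj
    rw [hij, sub_self, abs_zero] at h
    exact h.not_gt (mul_pos hκ (hne i hi j hj (Ne.symm hne')))
  rw [eval_eq_sum_mul_prod_div hinj (degree_lt_card_range_succ hP),
    chebyshev_T_eval_eq_sum_prod_div_abs, Finset.mul_sum]
  refine (Finset.abs_sum_le_sum_abs _ _).trans (Finset.sum_le_sum fun i hi => ?_)
  have hi' := Finset.mem_range_succ_iff.mp hi
  rw [abs_mul, Finset.abs_prod]
  refine mul_le_mul (hPx i hi') (Finset.prod_le_prod (fun _ _ => abs_nonneg _) fun j hj => ?_)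
    (Finset.prod_nonneg fun _ _ => abs_nonneg _) hN
  obtain ⟨hji, hj⟩ := Finset.mem_erase.mp hj
  have hj' := Finset.mem_range_succ_iff.mp hj
  have hpos := hne i hi' j hj' hji
  rw [abs_div]
  calc |t - x j| / |x i - x j|
      ≤ κ * (c - node n j) / (κ * |node n i - node n j|) :=
        div_le_div₀ ((abs_nonneg _).trans (hdist j hj')) (hdist j hj') (mul_pos hκ hpos)
          (hsep i hi' j hj')
    _ = (c - node n j) / |node n i - node n j| := mul_div_mul_left _ _ hκ.ne'

lemma lipschitzWith_volume_real_inter_Ici {E : Set ℝ} (hE : volume E ≠ ∞) :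
    LipschitzWith 1 fun x => volume.real (E ∩ Set.Ici x) := by
  refine LipschitzWith.of_le_add fun x y => ?_
  have hfin : volume (E ∩ Set.Ici y ∪ Set.Icc x y) ≠ ∞ :=
    (measure_union_lt_top ((measure_mono Set.inter_subset_left).trans_lt hE.lt_top)
      measure_Icc_lt_top).ne
  have hsub : E ∩ Set.Ici x ⊆ E ∩ Set.Ici y ∪ Set.Icc x y := fun z hz =>
    (le_total y z).imp (fun h => ⟨hz.1, h⟩) fun h => ⟨hz.2, h⟩
  calc volume.real (E ∩ Set.Ici x)
      ≤ volume.real (E ∩ Set.Ici y ∪ Set.Icc x y) := measureReal_mono hsub hfin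
    _ ≤ volume.real (E ∩ Set.Ici y) + volume.real (Set.Icc x y) := measureReal_union_le _ _
    _ ≤ volume.real (E ∩ Set.Ici y) + dist x y := by
      rw [Real.volume_real_Icc, Real.dist_eq, abs_sub_comm]
      gcongr
      exact max_le (le_abs_self _) (abs_nonneg _)

lemma exists_mem_volume_real_inter_Ici_eq {E : Set ℝ} (hE : IsCompact E) (hne : E.Nonempty) {ℓ : ℝ}
    (hℓ₀ : 0 ≤ ℓ) (hℓ : ℓ ≤ volume.real E) : ∃ x ∈ E, volume.real (E ∩ Set.Ici x) = ℓ := by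
  obtain ⟨m, -, hm⟩ := hE.exists_isLeast hne
  obtain ⟨M, hME, hM⟩ := hE.exists_isGreatest hne
  have hFm : volume.real (E ∩ Set.Ici m) = volume.real E := by
    rw [Set.inter_eq_left.mpr (show E ⊆ Set.Ici m from hm)]
  have hFM : volume.real (E ∩ Set.Ici M) = 0 := by
    have hsub : E ∩ Set.Ici M ⊆ {M} := fun z hz => le_antisymm (hM hz.1) hz.2
    rw [measureReal_def, measure_mono_null hsub Real.volume_singleton, ENNReal.toReal_zero]
  obtain ⟨y, hy, hFy⟩ := intermediate_value_Icc' (hm hME)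
    (lipschitzWith_volume_real_inter_Ici hE.measure_ne_top).continuous.continuousOn
    ⟨hFM.trans_le hℓ₀, hℓ.trans_eq hFm.symm⟩
  obtain ⟨x, ⟨hxE, hyx⟩, hx⟩ := (hE.inter_right isClosed_Ici).exists_isLeast ⟨M, hME, hy.2⟩
  refine ⟨x, hxE, ?_⟩
  rw [← hFy]
  congr 1
  ext z
  exact ⟨fun hz => ⟨hz.1, Set.Ici_subset_Ici.mpr hyx hz.2⟩, fun hz => ⟨hz.1, hx hz⟩⟩

lemma chebyshev_T_eval_cosh_le_exp (n : ℕ) {ε : ℝ} (hε : 0 ≤ ε) :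
    (T ℝ n).eval (Real.cosh ε) ≤ Real.exp (ε * n) := by
  have hexp : Real.exp (-(ε * n)) ≤ Real.exp (ε * n) :=
    Real.exp_le_exp.mpr (neg_le_self (by positivity))
  rw [T_real_cosh, Int.cast_natCast, mul_comm, Real.cosh_eq]
  linarith

/-- The Chebyshev nodes are compared with the points of `E` having the same proportion of `E`
above them: these are spread out at least as far, and lie at least as close to `0`. -/
lemma remez_abs_eval_zero_le {P : ℝ[X]} {n : ℕ} (hP : P.natDegree ≤ n) {N ε : ℝ} (hε : 0 ≤ ε)
    (hE : 2 / (Real.cosh ε + 1) ≤ volume.real {t ∈ Set.Icc (0 : ℝ) 1 | |P.eval t| ≤ N}) :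
    |P.eval 0| ≤ N * Real.exp (ε * n) := by
  set E := {t ∈ Set.Icc (0 : ℝ) 1 | |P.eval t| ≤ N}
  set c := Real.cosh ε
  have hc : 0 < c + 1 := by have := Real.cosh_pos ε; positivity
  have hEc : IsCompact E := isCompact_Icc.inter_right
    (isClosed_le (continuous_abs.comp P.continuous) continuous_const)
  have hEne : E.Nonempty := by
    by_contra h
    rw [Set.not_nonempty_iff_eq_empty.mp h, measureReal_empty] at hE
    exact hE.not_gt (by positivity)
  have hN : 0 ≤ N := hEne.elim fun t ht => (abs_nonneg _).trans ht.2
  have hnode := fun i => node_mem_Icc (n := n) (i := i)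
  have hquant : ∀ i, ∃ x ∈ E, volume.real (E ∩ Set.Ici x) = (1 + node n i) / (c + 1) := fun i =>
    exists_mem_volume_real_inter_Ici_eq hEc hEne
      (div_nonneg (by linarith [(hnode i).1]) hc.le)
      (le_trans (by gcongr; linarith [(hnode i).2]) hE)
  choose x hxE hx using hquant
  refine (abs_eval_le_mul_chebyshev_T_of_node_comparison hP (κ := (c + 1)⁻¹) (inv_pos.mpr hc) hN
    (x := x) (c := c) (fun i _ j _ => ?_) (fun j _ => ?_) fun i _ => (hxE i).2).trans
    (mul_le_mul_of_nonneg_left (chebyshev_T_eval_cosh_le_exp n hε) hN)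
  · have h := (lipschitzWith_volume_real_inter_Ici hEc.measure_ne_top).dist_le_mul (x i) (x j)
    rw [Real.dist_eq, hx, hx, NNReal.coe_one, one_mul, Real.dist_eq, ← sub_div, abs_div,
      abs_of_pos hc, add_sub_add_left_eq_sub] at h
    rwa [inv_mul_eq_div]
  · have h : (1 + node n j) / (c + 1) ≤ 1 - x j := by
      rw [← hx j]
      calc volume.real (E ∩ Set.Ici (x j)) ≤ volume.real (Set.Icc (x j) 1) :=
            measureReal_mono (fun z hz => ⟨hz.2, hz.1.1.2⟩) measure_Icc_lt_top.ne
        _ = 1 - x j := Real.volume_real_Icc_of_le (hxE j).1.2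
    rw [zero_sub, abs_neg, abs_of_nonneg (hxE j).1.1]
    field_simp at h ⊢
    linarith

end Remez

section Markov

open Polynomial Polynomial.Chebyshev

lemma markov_abs_derivative_eval_one_le {P : ℝ[X]} {n : ℕ} (hP : P.natDegree ≤ n) {M : ℝ}
    (hM : 0 < M) (hPM : ∀ x ∈ Set.Icc (-1 : ℝ) 1, |P.eval x| ≤ M) :
    |P.derivative.eval 1| ≤ n ^ 2 * M := by
  have hdeg : ∀ a : ℝ, (C a * P).degree ≤ n := fun a =>
    natDegree_le_iff_degree_le.mp ((natDegree_C_mul_le a P).trans hP)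
  have hbound : ∀ a : ℝ, |a| = M⁻¹ → a * P.derivative.eval 1 ≤ n ^ 2 := by
    intro a ha
    have h := eval_iterate_derivative_le_of_forall_abs_le_one (k := 1) le_rfl (hdeg a)
      fun x hx => by
        rw [eval_mul, eval_C, abs_mul, ha, inv_mul_le_one₀ hM]
        exact hPM x hx
    simpa [derivative_T_eval_one] using h
  rw [abs_le', ← inv_mul_le_iff₀' hM, ← inv_mul_le_iff₀' hM, mul_neg, ← neg_mul]
  exact ⟨hbound _ (abs_of_pos (inv_pos.mpr hM)),
    hbound _ (by rw [abs_neg, abs_of_pos (inv_pos.mpr hM)])⟩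

lemma markov_abs_derivative_eval_right_le {P : ℝ[X]} {n : ℕ} (hP : P.natDegree ≤ n) {a b M : ℝ}
    (hab : a < b) (hM : 0 < M) (hPM : ∀ x ∈ Set.Icc a b, |P.eval x| ≤ M) :
    |P.derivative.eval b| ≤ 2 * n ^ 2 * M / (b - a) := by
  set A : ℝ[X] := C ((b - a) / 2) * X + C ((a + b) / 2) with hA
  have hAeval : ∀ x, A.eval x = (b - a) / 2 * x + (a + b) / 2 := by simp [hA]
  have hdeg : (P.comp A).natDegree ≤ n :=
    natDegree_comp_le.trans ((Nat.mul_le_mul hP natDegree_linear_le).trans_eq (mul_one n))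
  have h := markov_abs_derivative_eval_one_le hdeg hM fun x hx => by
    rw [eval_comp, hAeval]
    exact hPM _ ⟨by nlinarith [hx.1], by nlinarith [hx.2]⟩
  have hb : A.eval 1 = b := by rw [hAeval]; ring
  have hA' : A.derivative = C ((b - a) / 2) := by simp [hA]
  rw [derivative_comp, eval_mul, eval_comp, hb, hA', eval_C, abs_mul,
    abs_of_pos (by linarith)] at h
  rw [le_div_iff₀ (sub_pos.mpr hab)]
  linarith

lemma abs_eval_sub_eval_zero_le {P : ℝ[X]} {n : ℕ} (hP : P.natDegree ≤ n) {M : ℝ} (hM : 0 < M)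
    (hPM : ∀ x ∈ Set.Icc (-1 : ℝ) 1, |P.eval x| ≤ M) {t : ℝ} (ht : t ∈ Set.Icc (0 : ℝ) 1) :
    |P.eval t - P.eval 0| ≤ 2 * n ^ 2 * M * t := by
  have hderiv : ∀ x ∈ Set.Icc (0 : ℝ) 1, ‖P.derivative.eval x‖ ≤ 2 * n ^ 2 * M := fun x hx =>
    (markov_abs_derivative_eval_right_le hP (by linarith [hx.1]) hM fun y hy =>
      hPM y ⟨hy.1, hy.2.trans hx.2⟩).trans (div_le_self (by positivity) (by linarith [hx.1]))
  have h := (convex_Icc (0 : ℝ) 1).norm_image_sub_le_of_norm_hasDerivWithin_le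
    (fun x _ => (P.hasDerivAt x).hasDerivWithinAt) hderiv (Set.left_mem_Icc.mpr zero_le_one) ht
  rwa [sub_zero, Real.norm_eq_abs, Real.norm_of_nonneg ht.1] at h

end Markov

section PolynomialOnLines

open Polynomial

variable {V : Type*} [NormedAddCommGroup V] [NormedSpace ℝ V]

/-- Continuous real functions on a real normed space that restrict to a polynomial of degree at
most `d` in the parameter on every real line: the only feature of polynomials which the one
variable inequalities of Remez and Markov require. -/
def IsPolynomialOnLines (d : ℕ) (g : V → ℝ) : Prop :=
  Continuous g ∧ ∀ a v : V, ∃ q : ℝ[X], q.natDegree ≤ d ∧ ∀ t : ℝ, g (a + t • v) = q.eval t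

lemma IsPolynomialOnLines.abs_sub_le {d : ℕ} {g : V → ℝ} (hg : IsPolynomialOnLines d g) {M R : ℝ}
    (hM : 0 < M) (hR : 0 < R) {z : V} (hgM : ∀ y ∈ Metric.closedBall z R, |g y| ≤ M) {y : V}
    (hy : y ∈ Metric.closedBall z R) : |g y - g z| ≤ 2 * d ^ 2 * M / R * dist y z := by
  rcases eq_or_ne y z with rfl | hne
  · simp
  have hpos : 0 < dist y z := dist_pos.mpr hne
  set v : V := (R / dist y z) • (y - z) with hv
  have hnorm : ‖v‖ = R := by
    rw [hv, norm_smul, Real.norm_of_nonneg (by positivity), ← dist_eq_norm,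
      div_mul_cancel₀ _ hpos.ne']
  obtain ⟨q, hqd, hq⟩ := hg.2 z v
  have h := abs_eval_sub_eval_zero_le hqd hM (t := dist y z / R) (fun x hx => by
    rw [← hq]
    refine hgM _ ?_
    rw [mem_closedBall_iff_norm, add_sub_cancel_left, norm_smul, hnorm]
    exact mul_le_of_le_one_left hR.le (abs_le.mpr hx)) ⟨by positivity, div_le_one_of_le₀ hy hR.le⟩
  have hyz : z + (dist y z / R) • v = y := by
    rw [hv, smul_smul, div_mul_div_cancel₀ hR.ne', div_self hpos.ne', one_smul, add_sub_cancel]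
  rw [← hq, ← hq, zero_smul, add_zero, hyz] at h
  exact h.trans_eq (by ring)

end PolynomialOnLines

section RemezConvex

open Polynomial Module

variable {V : Type*} [NormedAddCommGroup V] [NormedSpace ℝ V] [MeasurableSpace V] [BorelSpace V]

lemma measurableSet_segment_slices {S : Set V} (hS : MeasurableSet S) (a : V) (s : ℝ) :
    MeasurableSet {p : V × ℝ | p.2 ∈ Set.Icc s 1 ∧ a + p.2 • (p.1 - a) ∈ S} :=
  (measurable_snd measurableSet_Icc).inter
    ((by fun_prop : Measurable fun p : V × ℝ => a + p.2 • (p.1 - a)) hS)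

variable [FiniteDimensional ℝ V] (lam : Measure V) [lam.IsAddHaarMeasure]

lemma lintegral_volume_segment_slice_le {S : Set V} (hS : MeasurableSet S) (a : V) {s : ℝ}
    (hs : 0 < s) :
    ∫⁻ b, volume {t ∈ Set.Icc s 1 | a + t • (b - a) ∈ S} ∂lam ≤
      ENNReal.ofReal (s ^ finrank ℝ V)⁻¹ * lam S := by
  set U : Set (V × ℝ) := {p | p.2 ∈ Set.Icc s 1 ∧ a + p.2 • (p.1 - a) ∈ S} with hU
  have hUmeas : MeasurableSet U := measurableSet_segment_slices hS a s
  have hslice : ∀ t ∈ Set.Icc s 1,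
      lam ((fun b => (b, t)) ⁻¹' U) ≤ ENNReal.ofReal (s ^ finrank ℝ V)⁻¹ * lam S := by
    intro t ht
    have ht0 : 0 < t := hs.trans_le ht.1
    have hpre : (fun b => (b, t)) ⁻¹' U =
        (fun b => b + -a) ⁻¹' ((t • ·) ⁻¹' ((fun b => a + b) ⁻¹' S)) := by
      ext b
      simp [hU, ht.1, ht.2, sub_eq_add_neg]
    rw [hpre, measure_preimage_add_right, Measure.addHaar_preimage_smul _ ht0.ne',
      measure_preimage_add, abs_of_pos (by positivity)]
    gcongr
    exact ht.1
  calc ∫⁻ b, volume {t ∈ Set.Icc s 1 | a + t • (b - a) ∈ S} ∂lam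
      = ∫⁻ t, lam ((fun b => (b, t)) ⁻¹' U) := by
        rw [← Measure.prod_apply_symm hUmeas, Measure.prod_apply hUmeas]
        rfl
    _ ≤ ∫⁻ t, (Set.Icc s 1).indicator
          (fun _ => ENNReal.ofReal (s ^ finrank ℝ V)⁻¹ * lam S) t := by
        refine lintegral_mono fun t => ?_
        by_cases ht : t ∈ Set.Icc s 1
        · rw [Set.indicator_of_mem ht]
          exact hslice t ht
        · have hempty : (fun b => (b, t)) ⁻¹' U = ∅ :=
            Set.eq_empty_of_forall_notMem fun b hb => ht hb.1
          rw [hempty, measure_empty]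
          exact zero_le
    _ = ENNReal.ofReal (s ^ finrank ℝ V)⁻¹ * lam S * ENNReal.ofReal (1 - s) := by
        rw [lintegral_indicator_const measurableSet_Icc, Real.volume_Icc]
    _ ≤ ENNReal.ofReal (s ^ finrank ℝ V)⁻¹ * lam S :=
        mul_le_of_le_one_right' (ENNReal.ofReal_le_one.mpr (by linarith))

lemma exists_volume_segment_inter_le {B : Set V} (hB₀ : lam B ≠ 0) (hB : lam B ≠ ∞) {η : ℝ}
    (hη : 0 < η) :
    ∃ δ : ℝ≥0∞, 0 < δ ∧ ∀ S : Set V, lam S ≤ δ → ∀ a : V, ∃ b ∈ B,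
      volume {t ∈ Set.Icc (0 : ℝ) 1 | a + t • (b - a) ∈ S} ≤ ENNReal.ofReal η := by
  set κ : ℝ := η / 2 with hκη
  have hκ : 0 < κ := half_pos hη
  have : 0 < lam B := pos_iff_ne_zero.mpr hB₀
  refine ⟨ENNReal.ofReal (κ ^ finrank ℝ V) * (ENNReal.ofReal κ * lam B), by positivity,
    fun S hS a => ?_⟩
  have hS' := measurableSet_toMeasurable lam S
  set m : V → ℝ≥0∞ := fun b => volume {t ∈ Set.Icc κ 1 | a + t • (b - a) ∈ toMeasurable lam S}
  have hm : ∫⁻ b, m b ∂lam ≤ ENNReal.ofReal κ * lam B := by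
    refine (lintegral_volume_segment_slice_le lam hS' a hκ).trans ?_
    rw [measure_toMeasurable, ENNReal.ofReal_inv_of_pos (by positivity)]
    exact (ENNReal.inv_mul_le_iff (by simpa using pow_pos hκ _) ENNReal.ofReal_ne_top).mpr hS
  have haverage : ⨍⁻ b in B, m b ∂lam ≤ ENNReal.ofReal κ := by
    rw [setLAverage_eq]
    exact ENNReal.div_le_of_le_mul ((setLIntegral_le_lintegral _ _).trans hm)
  obtain ⟨b, hbB, hb⟩ := exists_le_setLAverage hB₀ hB
    (measurable_measure_prodMk_left (ν := volume)
      (measurableSet_segment_slices hS' a κ)).aemeasurable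
  have hsub : {t ∈ Set.Icc (0 : ℝ) 1 | a + t • (b - a) ∈ S} ⊆
      Set.Icc 0 κ ∪ {t ∈ Set.Icc κ 1 | a + t • (b - a) ∈ toMeasurable lam S} := fun t ht =>
    (le_total t κ).imp (fun h => ⟨ht.1.1, h⟩) fun h =>
      ⟨⟨h, ht.1.2⟩, subset_toMeasurable _ _ ht.2⟩
  refine ⟨b, hbB, (measure_mono hsub).trans ((measure_union_le _ _).trans ?_)⟩
  calc volume (Set.Icc 0 κ) + m b ≤ ENNReal.ofReal κ + ENNReal.ofReal κ := by
        rw [Real.volume_Icc, sub_zero]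
        gcongr
        exact hb.trans haverage
    _ = ENNReal.ofReal η := by rw [← ENNReal.ofReal_add hκ.le hκ.le, hκη, add_halves]

/-- At `z ∈ K` the one variable inequality is applied on a segment from `z` that spends little
time in `S`. -/
lemma remez_abs_le_of_convex {K : Set V} (hK : Convex ℝ K) (hKint : (interior K).Nonempty)
    {ε : ℝ} (hε : 0 < ε) :
    ∃ δ : ℝ≥0∞, 0 < δ ∧ ∀ S : Set V, lam S ≤ δ → ∀ (d : ℕ) (g : V → ℝ),
      IsPolynomialOnLines d g → ∀ N : ℝ, (∀ y ∈ K \ S, |g y| ≤ N) →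
        ∀ z ∈ K, |g z| ≤ N * Real.exp (ε * d) := by
  obtain ⟨w, hw⟩ := hKint
  obtain ⟨r, hr, hball⟩ := Metric.isOpen_iff.mp isOpen_interior w hw
  have hη : 0 < 1 - 2 / (Real.cosh ε + 1) := by
    have hcosh : 1 < Real.cosh ε := Real.one_lt_cosh.mpr hε.ne'
    rw [sub_pos, div_lt_one (by linarith)]
    linarith
  obtain ⟨δ, hδ, hslice⟩ := exists_volume_segment_inter_le lam
    (Metric.measure_ball_pos lam w hr).ne' measure_ball_lt_top.ne hη
  refine ⟨δ, hδ, fun S hS d g hg N hgN z hz => ?_⟩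
  obtain ⟨b, hbB, hb⟩ := hslice S hS z
  obtain ⟨q, hqd, hq⟩ := hg.2 z (b - z)
  set A := {t ∈ Set.Icc (0 : ℝ) 1 | z + t • (b - z) ∈ S}
  have hsub : Set.Icc (0 : ℝ) 1 ⊆ {t ∈ Set.Icc (0 : ℝ) 1 | |q.eval t| ≤ N} ∪ A := by
    intro t ht
    by_cases hmem : z + t • (b - z) ∈ S
    · exact Or.inr ⟨ht, hmem⟩
    · exact Or.inl ⟨ht, hq t ▸ hgN _
        ⟨hK.add_smul_sub_mem hz (interior_subset (hball hbB)) ht, hmem⟩⟩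
  have hfin : ∀ p : ℝ → Prop, volume {t ∈ Set.Icc (0 : ℝ) 1 | p t} ≠ ∞ := fun p =>
    ((measure_mono (Set.sep_subset _ _)).trans_lt measure_Icc_lt_top).ne
  have hA' : volume.real A ≤ 1 - 2 / (Real.cosh ε + 1) := ENNReal.toReal_le_of_le_ofReal hη.le hb
  have hvol : 1 ≤ volume.real {t ∈ Set.Icc (0 : ℝ) 1 | |q.eval t| ≤ N} + volume.real A := by
    calc (1 : ℝ) = volume.real (Set.Icc (0 : ℝ) 1) := by simp
      _ ≤ _ := (measureReal_mono hsub (measure_union_ne_top (hfin _) (hfin _))).trans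
        (measureReal_union_le _ _)
  have h := remez_abs_eval_zero_le hqd (N := N) hε.le (by linarith)
  rwa [← hq, zero_smul, add_zero] at h

end RemezConvex

section DensitySet

lemma isClosed_setOf_le_measure_closedBall {X : Type*} [PseudoMetricSpace X] [MeasurableSpace X]
    [OpensMeasurableSpace X] (ν : Measure X) [IsFiniteMeasure ν] (c : ℝ≥0∞) (r : ℝ) :
    IsClosed {z | c ≤ ν (Metric.closedBall z r)} := by
  refine isClosed_of_closure_subset fun z hz => ?_
  have hlarger : ∀ s > r, c ≤ ν (Metric.closedBall z s) := fun s hs => by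
    obtain ⟨y, hy, hyz⟩ := Metric.mem_closure_iff.mp hz (s - r) (sub_pos.mpr hs)
    rw [dist_comm] at hyz
    exact le_trans hy (measure_mono (Metric.closedBall_subset_closedBall' (by linarith)))
  have hlim := tendsto_measure_biInter_gt (μ := ν) (a := r)
    (fun s _ => Metric.isClosed_closedBall.measurableSet.nullMeasurableSet)
    (fun _ _ _ hij => Metric.closedBall_subset_closedBall (x := z) hij)
    ⟨r + 1, by linarith, measure_ne_top _ _⟩
  rw [Metric.biInter_gt_closedBall] at hlim
  exact ge_of_tendsto hlim (eventually_mem_nhdsWithin.mono hlarger)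

/-- The local form at `z` of the density condition with exponent `T`. -/
def HasLowerDensity {X : Type*} [PseudoMetricSpace X] [MeasurableSpace X] (ν : Measure X) (T : ℝ)
    (z : X) : Prop :=
  ∃ r₀ > 0, ∀ r : ℝ, 0 < r → r < r₀ → ENNReal.ofReal (r ^ T) ≤ ν (Metric.ball z r)

variable {V : Type*} [NormedAddCommGroup V] [MeasurableSpace V]

/-- The points of `K` at distance at least `R` from its complement where `ν` satisfies the lower
density bound with exponent `T` at all scales up to `R`. -/
def densitySet (ν : Measure V) (K : Set V) (T R : ℝ) : Set V :=
  {z | Metric.closedBall z R ⊆ K ∧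
    ∀ r ∈ Set.Ioc 0 R, ENNReal.ofReal (r ^ T) ≤ ν (Metric.closedBall z r)}

lemma densitySet_anti (ν : Measure V) (K : Set V) (T : ℝ) : Antitone (densitySet ν K T) :=
  fun _ _ hR _ hz => ⟨(Metric.closedBall_subset_closedBall hR).trans hz.1,
    fun r hr => hz.2 r ⟨hr.1, hr.2.trans hR⟩⟩

lemma isClosed_densitySet [BorelSpace V] (ν : Measure V) [IsFiniteMeasure ν] {K : Set V}
    (hK : IsClosed K) (T R : ℝ) : IsClosed (densitySet ν K T R) := by
  have hball : ∀ z, Metric.closedBall z R ⊆ K ↔ ∀ u ∈ Metric.closedBall (0 : V) R, z + u ∈ K :=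
    fun z => ⟨fun h u hu => h (by simpa using hu), fun h y hy => by
      simpa using h (y - z) (by simpa [dist_eq_norm] using hy)⟩
  have heq : densitySet ν K T R = (⋂ u ∈ Metric.closedBall (0 : V) R, (fun z => z + u) ⁻¹' K) ∩
      ⋂ r ∈ Set.Ioc 0 R, {z | ENNReal.ofReal (r ^ T) ≤ ν (Metric.closedBall z r)} := by
    ext z
    simp [densitySet, hball]
  rw [heq]
  exact (isClosed_biInter fun u _ => hK.preimage (by fun_prop)).inter
    (isClosed_biInter fun r _ => isClosed_setOf_le_measure_closedBall ν _ r)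

lemma interior_subset_iUnion_densitySet {ν : Measure V} {K : Set V} {T : ℝ}
    (hdens : ∀ z ∈ interior K, HasLowerDensity ν T z) :
    interior K ⊆ ⋃ k : ℕ, densitySet ν K T (1 / (k + 1)) := by
  intro z hz
  obtain ⟨r₀, hr₀, hν⟩ := hdens z hz
  obtain ⟨ρ, hρ, hball⟩ := Metric.isOpen_iff.mp isOpen_interior z hz
  obtain ⟨k, hk⟩ := exists_nat_one_div_lt (lt_min hr₀ hρ)
  refine Set.mem_iUnion.mpr ⟨k, ?_, fun r hr => ?_⟩
  · exact ((Metric.closedBall_subset_ball (hk.trans_le (min_le_right _ _))).trans hball).trans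
      interior_subset
  · exact (hν r hr.1 (hr.2.trans_lt (hk.trans_le (min_le_left _ _)))).trans
      (measure_mono Metric.ball_subset_closedBall)

lemma ofReal_mul_rpow_le_setLIntegral [BorelSpace V] {ν : Measure V} {K : Set V}
    {T R ρ m : ℝ} {g : V → ℝ} (hm : 0 ≤ m)
    (hρ : ρ ∈ Set.Ioc 0 R) {z : V} (hz : z ∈ densitySet ν K T R)
    (hgm : ∀ y ∈ Metric.closedBall z ρ, m ≤ |g y|) :
    ENNReal.ofReal (m * ρ ^ T) ≤ ∫⁻ y in K, ENNReal.ofReal |g y| ∂ν := by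
  have hsub : Metric.closedBall z ρ ⊆ K :=
    (Metric.closedBall_subset_closedBall hρ.2).trans hz.1
  calc ENNReal.ofReal (m * ρ ^ T) = ENNReal.ofReal m * ENNReal.ofReal (ρ ^ T) :=
        ENNReal.ofReal_mul hm
    _ ≤ ENNReal.ofReal m * ν (Metric.closedBall z ρ) := by gcongr; exact hz.2 ρ hρ
    _ = ∫⁻ _ in Metric.closedBall z ρ, ENNReal.ofReal m ∂ν := (setLIntegral_const _ _).symm
    _ ≤ ∫⁻ y in Metric.closedBall z ρ, ENNReal.ofReal |g y| ∂ν :=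
        setLIntegral_mono' Metric.isClosed_closedBall.measurableSet fun y hy =>
          ENNReal.ofReal_le_ofReal (hgm y hy)
    _ ≤ ∫⁻ y in K, ENNReal.ofReal |g y| ∂ν := lintegral_mono_set hsub

lemma exists_measure_diff_densitySet_le [NormedSpace ℝ V] [FiniteDimensional ℝ V] [BorelSpace V]
    (lam : Measure V) [lam.IsAddHaarMeasure] {K : Set V} (hKc : IsCompact K) (hK : Convex ℝ K)
    {ν : Measure V} [IsFiniteMeasure ν] {T : ℝ}
    (hdens : ∀ z ∈ interior K, HasLowerDensity ν T z)
    {δ : ℝ≥0∞} (hδ : 0 < δ) : ∃ R > 0, lam (K \ densitySet ν K T R) ≤ δ := by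
  have hmeas : ∀ k : ℕ, NullMeasurableSet (K \ densitySet ν K T (1 / (k + 1))) lam := fun k =>
    (hKc.measurableSet.diff
      (isClosed_densitySet ν hKc.isClosed T _).measurableSet).nullMeasurableSet
  have hanti : Antitone fun k : ℕ => K \ densitySet ν K T (1 / (k + 1)) := fun i j hij =>
    Set.sdiff_subset_sdiff_right (densitySet_anti ν K T (Nat.one_div_le_one_div hij))
  have hlim := tendsto_measure_iInter_atTop hmeas hanti
    ⟨0, ((measure_mono Set.sdiff_subset).trans_lt hKc.measure_lt_top).ne⟩
  have hnull : lam (⋂ k : ℕ, K \ densitySet ν K T (1 / (k + 1))) = 0 := by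
    refine measure_mono_null (fun z hz => ?_) (hK.addHaar_frontier lam)
    rw [← Set.sdiff_iUnion] at hz
    exact ⟨subset_closure hz.1, fun h => hz.2 (interior_subset_iUnion_densitySet hdens h)⟩
  rw [hnull] at hlim
  obtain ⟨k, hk⟩ := (hlim.eventually_le_const hδ).exists
  exact ⟨1 / (k + 1), Nat.one_div_pos_of_nat, hk⟩

end DensitySet

section BernsteinMarkov

lemma sq_le_two_div_sq_mul_exp {ε : ℝ} (hε : 0 < ε) (d : ℕ) :
    (d : ℝ) ^ 2 ≤ 2 / ε ^ 2 * Real.exp (ε * d) := by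
  have h := Real.quadratic_le_exp_of_nonneg (show 0 ≤ ε * d by positivity)
  rw [div_mul_eq_mul_div, le_div_iff₀ (by positivity)]
  nlinarith [show 0 ≤ ε * d by positivity]

lemma min_mul_mul_exp_neg_le {c R ε : ℝ} (hR : 0 ≤ R) (hε : 0 ≤ ε) (d : ℕ) :
    min 1 c * R * Real.exp (-(2 * ε * d)) ≤ R := by
  calc min 1 c * R * Real.exp (-(2 * ε * d)) ≤ 1 * R * 1 := by
        gcongr
        · exact min_le_left _ _
        · exact Real.exp_le_one_iff.mpr (neg_nonpos.mpr (by positivity))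
    _ = R := by ring

variable {V : Type*} [NormedAddCommGroup V] [NormedSpace ℝ V]

lemma IsPolynomialOnLines.le_abs_of_mem_closedBall {d : ℕ} {g : V → ℝ}
    (hg : IsPolynomialOnLines d g) {M R ε : ℝ} (hM : 0 < M) (hR : 0 < R) (hε : 0 < ε) {z : V}
    (hgM : ∀ y ∈ Metric.closedBall z R, |g y| ≤ M)
    (hz : M * Real.exp (-(ε * d)) / 2 ≤ |g z|) {y : V}
    (hy : y ∈ Metric.closedBall z (min 1 (ε ^ 2 / 16) * R * Real.exp (-(2 * ε * d)))) :
    M * Real.exp (-(ε * d)) / 4 ≤ |g y| := by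
  set c := min 1 (ε ^ 2 / 16)
  have hexp : Real.exp (-(2 * ε * d)) = Real.exp (-(ε * d)) * Real.exp (-(ε * d)) := by
    rw [← Real.exp_add]; ring_nf
  have hyR : y ∈ Metric.closedBall z R :=
    Metric.closedBall_subset_closedBall (min_mul_mul_exp_neg_le hR.le hε.le d) hy
  have hdiff : |g y - g z| ≤ M * Real.exp (-(ε * d)) / 4 := by
    calc |g y - g z| ≤ 2 * d ^ 2 * M / R * dist y z := hg.abs_sub_le hM hR hgM hyR
      _ ≤ 2 * (2 / ε ^ 2 * Real.exp (ε * d)) * M / R *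
          (ε ^ 2 / 16 * R * Real.exp (-(2 * ε * d))) := by
        gcongr
        · exact sq_le_two_div_sq_mul_exp hε d
        · exact (Metric.mem_closedBall.mp hy).trans (by gcongr; exact min_le_right _ _)
      _ = M * Real.exp (-(ε * d)) / 4 * (Real.exp (ε * d) * Real.exp (-(ε * d))) := by
        rw [hexp]; field_simp; ring
      _ = M * Real.exp (-(ε * d)) / 4 := by
        rw [← Real.exp_add, add_neg_cancel, Real.exp_zero, mul_one]
  have htri := abs_sub_abs_le_abs_sub (g z) (g y)
  rw [abs_sub_comm] at htri
  linarith

variable [FiniteDimensional ℝ V] [MeasurableSpace V] [BorelSpace V] {K : Set V}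

lemma exists_forall_mul_exp_mul_abs_le_setLIntegral (hKc : IsCompact K) (hK : Convex ℝ K)
    (hKint : (interior K).Nonempty) {ν : Measure V} [IsFiniteMeasure ν] {T : ℝ}
    (hdens : ∀ z ∈ interior K, HasLowerDensity ν T z) {ε : ℝ} (hε : 0 < ε) :
    ∃ C > 0, ∀ (d : ℕ) (g : V → ℝ), IsPolynomialOnLines d g → ∀ z ∈ K,
      ENNReal.ofReal (C * Real.exp (-(ε * (1 + 2 * T) * d)) * |g z|) ≤
        ∫⁻ y in K, ENNReal.ofReal |g y| ∂ν := by
  obtain ⟨δ, hδ, hremez⟩ := remez_abs_le_of_convex Measure.addHaar hK hKint hε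
  obtain ⟨R, hR, hAδ⟩ := exists_measure_diff_densitySet_le Measure.addHaar hKc hK hdens hδ
  set c := min 1 (ε ^ 2 / 16)
  have : 0 < c := by positivity
  refine ⟨(c * R) ^ T / 4, by positivity, fun d g hg z hz => ?_⟩
  obtain ⟨x, hx, hmax⟩ := hKc.exists_isMaxOn ⟨z, hz⟩ hg.1.abs.continuousOn
  set M := |g x|
  rcases (abs_nonneg (g x)).eq_or_lt with hM | hM
  · have hz0 : |g z| = 0 := le_antisymm ((hmax hz).trans_eq hM.symm) (abs_nonneg _)
    simp [hz0]
  obtain ⟨y, hyA, hy⟩ : ∃ y ∈ densitySet ν K T R, M * Real.exp (-(ε * d)) / 2 ≤ |g y| := by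
    by_contra! hsmall
    have h := hremez _ hAδ d g hg (M * Real.exp (-(ε * d)) / 2)
      (fun y hy => (hsmall y (by_contra fun h => hy.2 ⟨hy.1, h⟩)).le) x hx
    have hcancel : M * Real.exp (-(ε * d)) / 2 * Real.exp (ε * d) = M / 2 := by
      rw [div_mul_eq_mul_div, mul_assoc, ← Real.exp_add, neg_add_cancel, Real.exp_zero, mul_one]
    exact (h.trans_eq hcancel).not_gt (half_lt_self hM)
  set ρ := c * R * Real.exp (-(2 * ε * d))
  have hρ : ρ ∈ Set.Ioc 0 R := ⟨by positivity, min_mul_mul_exp_neg_le hR.le hε.le d⟩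
  have hlower : ∀ w ∈ Metric.closedBall y ρ, M * Real.exp (-(ε * d)) / 4 ≤ |g w| := fun w hw =>
    hg.le_abs_of_mem_closedBall hM hR hε (fun u hu => hmax (hyA.1 hu)) hy hw
  refine le_trans (ENNReal.ofReal_le_ofReal ?_)
    (ofReal_mul_rpow_le_setLIntegral (by positivity) hρ hyA hlower)
  have hρT : ρ ^ T = (c * R) ^ T * Real.exp (-(2 * ε * T * d)) := by
    rw [Real.mul_rpow (by positivity) (by positivity), ← Real.exp_mul]
    ring_nf
  calc (c * R) ^ T / 4 * Real.exp (-(ε * (1 + 2 * T) * d)) * |g z|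
      ≤ (c * R) ^ T / 4 * Real.exp (-(ε * (1 + 2 * T) * d)) * M := by gcongr; exact hmax hz
    _ = (c * R) ^ T / 4 * (Real.exp (-(ε * d)) * Real.exp (-(2 * ε * T * d))) * M := by
        rw [← Real.exp_add]; ring_nf
    _ = M * Real.exp (-(ε * d)) / 4 * ρ ^ T := by rw [hρT]; ring

lemma eventually_ofReal_exp_mul_abs_le_setLIntegral (hKc : IsCompact K) (hK : Convex ℝ K)
    (hKint : (interior K).Nonempty) {ν : Measure V} [IsFiniteMeasure ν] {T : ℝ}
    (hdens : ∀ z ∈ interior K, HasLowerDensity ν T z) {ε : ℝ} (hε : 0 < ε) :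
    ∀ᶠ d : ℕ in atTop, ∀ g : V → ℝ, IsPolynomialOnLines d g → ∀ z ∈ K,
      ENNReal.ofReal (Real.exp (-(ε * d)) * |g z|) ≤ ∫⁻ y in K, ENNReal.ofReal |g y| ∂ν := by
  set ε' := ε / (2 * (1 + 2 * |T|))
  have hε' : ε' * (1 + 2 * T) ≤ ε / 2 := by
    calc ε' * (1 + 2 * T) ≤ ε' * (1 + 2 * |T|) := by gcongr; exact le_abs_self T
      _ = ε / 2 := by simp only [ε']; field_simp
  obtain ⟨C, hC, hbound⟩ :=
    exists_forall_mul_exp_mul_abs_le_setLIntegral hKc hK hKint hdens (show 0 < ε' by positivity)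
  have hlim : Tendsto (fun d : ℕ => Real.exp (-(ε / 2 * d))) atTop (𝓝 0) :=
    Real.tendsto_exp_neg_atTop_nhds_zero.comp
      (tendsto_natCast_atTop_atTop.const_mul_atTop (by positivity))
  filter_upwards [hlim.eventually_le_const hC] with d hd g hg z hz
  refine le_trans (ENNReal.ofReal_le_ofReal ?_) (hbound d g hg z hz)
  calc Real.exp (-(ε * d)) * |g z|
      = Real.exp (-(ε / 2 * d)) * Real.exp (-(ε / 2 * d)) * |g z| := by
        rw [← Real.exp_add]; ring_nf
    _ ≤ C * Real.exp (-(ε' * (1 + 2 * T) * d)) * |g z| := by gcongr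

lemma nonempty_interior_inter_closedBall {E : Type*} [NormedAddCommGroup E]
    [NormedSpace ℝ E] {s : Set E} (hs : Convex ℝ s) (hint : (interior s).Nonempty) {x : E}
    (hx : x ∈ s) {r : ℝ} (hr : 0 < r) : (interior (s ∩ Metric.closedBall x r)).Nonempty := by
  have hxc : x ∈ closure (interior s) := by
    rw [hs.closure_interior_eq_closure_of_nonempty_interior hint]
    exact subset_closure hx
  obtain ⟨y, hy, hyr⟩ := Metric.mem_closure_iff.mp hxc r hr
  refine ⟨y, ?_⟩
  rw [interior_inter]
  exact ⟨hy, Metric.ball_subset_interior_closedBall (by rwa [Metric.mem_ball'])⟩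

/-- A finite cover of `K` by small balls makes the bound local, uniformly in the centre. -/
lemma eventually_ofReal_exp_mul_abs_le_setLIntegral_ball (hKc : IsCompact K) (hK : Convex ℝ K)
    (hKint : (interior K).Nonempty) {ν : Measure V} [IsFiniteMeasure ν] {T : ℝ}
    (hdens : ∀ z ∈ K, HasLowerDensity ν T z) {ρ ε : ℝ} (hρ : 0 < ρ) (hε : 0 < ε) :
    ∀ᶠ d : ℕ in atTop, ∀ g : V → ℝ, IsPolynomialOnLines d g → ∀ z ∈ K,
      ENNReal.ofReal (Real.exp (-(ε * d)) * |g z|) ≤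
        ∫⁻ y in K ∩ Metric.ball z ρ, ENNReal.ofReal |g y| ∂ν := by
  obtain ⟨t, htK, htfin, hcover⟩ :=
    Metric.finite_approx_of_totallyBounded hKc.totallyBounded (ρ / 3) (by positivity)
  have hpiece : ∀ x ∈ t, ∀ᶠ d : ℕ in atTop, ∀ g : V → ℝ, IsPolynomialOnLines d g →
      ∀ z ∈ K ∩ Metric.closedBall x (ρ / 3), ENNReal.ofReal (Real.exp (-(ε * d)) * |g z|) ≤
        ∫⁻ y in K ∩ Metric.closedBall x (ρ / 3), ENNReal.ofReal |g y| ∂ν := fun x hx =>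
    eventually_ofReal_exp_mul_abs_le_setLIntegral (hKc.inter_right Metric.isClosed_closedBall)
      (hK.inter (convex_closedBall _ _))
      (nonempty_interior_inter_closedBall hK hKint (htK hx) (by positivity))
      (fun z hz => hdens z (interior_subset hz).1) hε
  filter_upwards [(eventually_all_finite htfin).mpr hpiece] with d hd g hg z hz
  obtain ⟨x, hx, hzx⟩ := Set.mem_iUnion₂.mp (hcover hz)
  refine (hd x hx g hg z ⟨hz, Metric.ball_subset_closedBall hzx⟩).trans
    (lintegral_mono_set (Set.inter_subset_inter_right K (Metric.closedBall_subset_ball' ?_)))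
  rw [Metric.mem_ball, dist_comm] at hzx
  linarith

end BernsteinMarkov

section Vandermonde

open Polynomial in
lemma exists_natDegree_le_forall_eval_eq_re (p : ℂ[X]) :
    ∃ q : ℝ[X], q.natDegree ≤ p.natDegree ∧ ∀ t : ℝ, q.eval t = (p.eval (t : ℂ)).re := by
  refine ⟨∑ k ∈ Finset.range (p.natDegree + 1), C (p.coeff k).re * X ^ k,
    natDegree_sum_le_of_forall_le _ _ fun k hk =>
      (natDegree_C_mul_X_pow_le _ k).trans (Finset.mem_range_succ_iff.mp hk), fun t => ?_⟩
  rw [eval_finsetSum, p.eval_eq_sum_range, Complex.re_sum]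
  simp [← Complex.ofReal_pow]

open Polynomial in
lemma exists_natDegree_le_forall_eval_eq_norm_sq (p : ℂ[X]) :
    ∃ q : ℝ[X], q.natDegree ≤ 2 * p.natDegree ∧ ∀ t : ℝ, q.eval t = ‖p.eval (t : ℂ)‖ ^ 2 := by
  obtain ⟨q, hq, hqre⟩ := exists_natDegree_le_forall_eval_eq_re p
  obtain ⟨r, hr, hrre⟩ := exists_natDegree_le_forall_eval_eq_re (C (-Complex.I) * p)
  refine ⟨q ^ 2 + r ^ 2, natDegree_add_le_of_degree_le (natDegree_pow_le_of_le 2 hq)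
    (natDegree_pow_le_of_le 2 (hr.trans (natDegree_C_mul_le _ _))), fun t => ?_⟩
  rw [eval_add, eval_pow, eval_pow, hqre, hrre, Complex.sq_norm, Complex.normSq_apply]
  simp only [eval_mul, eval_C, neg_mul, Complex.neg_re, Complex.I_mul_re, neg_neg]
  ring

variable {n d : ℕ} {E : Fin (sdim n d) → (Fin n → ℕ)}

lemma continuous_VDM (E : Fin (sdim n d) → (Fin n → ℕ)) : Continuous (VDM n d E) := by
  refine Continuous.matrix_det (continuous_matrix fun i j => ?_)
  simp only [Matrix.of_apply]
  fun_prop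

lemma exists_forall_VDM_update_eq_sum (E : Fin (sdim n d) → (Fin n → ℕ))
    (x : Fin (sdim n d) → Pt n) (j : Fin (sdim n d)) :
    ∃ c : Fin (sdim n d) → ℂ, ∀ y : Pt n,
      VDM n d E (Function.update x j y) = ∑ i, c i * ∏ k, (y k) ^ (E i k) := by
  set A : Matrix (Fin (sdim n d)) (Fin (sdim n d)) ℂ := Matrix.of fun i j => ∏ k, (x j k) ^ (E i k)
  refine ⟨A.adjugate j, fun y => ?_⟩
  have hcramer : VDM n d E (Function.update x j y) =
      A.cramer (fun i => ∏ k, (y k) ^ (E i k)) j := by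
    rw [Matrix.cramer_apply, VDM]
    congr 1
    ext i l
    rcases eq_or_ne l j with rfl | hl
    · simp
    · simp [hl, A]
  rw [hcramer, Matrix.cramer_eq_adjugate_mulVec]
  rfl

open Polynomial in
lemma IsEnum.exists_natDegree_le_forall_eval_eq_VDM_update (hE : IsEnum n d E)
    (x : Fin (sdim n d) → Pt n) (j : Fin (sdim n d)) (a v : Pt n) :
    ∃ p : ℂ[X], p.natDegree ≤ d ∧
      ∀ t : ℝ, p.eval (t : ℂ) = VDM n d E (Function.update x j (a + t • v)) := by
  obtain ⟨c, hc⟩ := exists_forall_VDM_update_eq_sum E x j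
  refine ⟨∑ i, C (c i) * ∏ k, (C (a k) + C (v k) * X) ^ (E i k), ?_, fun t => ?_⟩
  · refine natDegree_sum_le_of_forall_le _ _ fun i _ => (natDegree_C_mul_le _ _).trans ?_
    calc (∏ k, (C (a k) + C (v k) * X) ^ (E i k)).natDegree
        ≤ ∑ k, ((C (a k) + C (v k) * X) ^ (E i k)).natDegree := natDegree_prod_le _ _
      _ ≤ ∑ k, E i k * 1 := by
          gcongr with k
          exact natDegree_pow_le_of_le _ (by compute_degree)
      _ ≤ d := by simpa using (hE.2 (E i)).mpr ⟨i, rfl⟩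
  · simp [hc, eval_finsetSum, eval_prod, mul_comm (t : ℂ)]

lemma IsEnum.isPolynomialOnLines_norm_sq_VDM_update (hE : IsEnum n d E)
    (x : Fin (sdim n d) → Pt n) (j : Fin (sdim n d)) :
    IsPolynomialOnLines (2 * d) fun y => ‖VDM n d E (Function.update x j y)‖ ^ 2 := by
  refine ⟨((continuous_VDM E).comp (by fun_prop)).norm.pow 2, fun a v => ?_⟩
  obtain ⟨p, hp, hpV⟩ := hE.exists_natDegree_le_forall_eval_eq_VDM_update x j a v
  obtain ⟨q, hq, hqp⟩ := exists_natDegree_le_forall_eval_eq_norm_sq p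
  exact ⟨q, hq.trans (by gcongr), fun t => by rw [hqp, hpV]⟩

end Vandermonde

section FubiniLowerBound

lemma pow_card_mul_le_setLIntegral_pi {ι X : Type*} [Fintype ι] [DecidableEq ι]
    [MeasurableSpace X] (ν : Measure X) [SigmaFinite ν] (B : ι → Set X) {F : (ι → X) → ℝ≥0∞}
    (hF : Measurable F) (c : ℝ≥0∞) (a : ι → X)
    (h : ∀ (i : ι) (x : ι → X), x i = a i →
      c * F x ≤ ∫⁻ y in B i, F (Function.update x i y) ∂ν) :
    c ^ Fintype.card ι * F a ≤ ∫⁻ x in Set.pi Set.univ B, F x ∂(Measure.pi fun _ => ν) := by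
  have hpartial : ∀ (S : Finset ι) (x : ι → X), (∀ i ∈ S, x i = a i) →
      c ^ S.card * F x ≤ (∫⋯∫⁻_S, F ∂(fun i => ν.restrict (B i))) x := by
    intro S
    induction S using Finset.induction_on with
    | empty => simp
    | insert i S hi ih =>
      intro x hx
      rw [lmarginal_insert _ hF hi, Finset.card_insert_of_notMem hi]
      calc c ^ (S.card + 1) * F x = c ^ S.card * (c * F x) := by rw [pow_succ, mul_assoc]
        _ ≤ c ^ S.card * ∫⁻ y in B i, F (Function.update x i y) ∂ν := by
            gcongr
            exact h i x (hx i (Finset.mem_insert_self _ _))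
        _ = ∫⁻ y in B i, c ^ S.card * F (Function.update x i y) ∂ν :=
            (lintegral_const_mul _ (hF.comp (measurable_update x))).symm
        _ ≤ _ := lintegral_mono fun y => ih _ fun j hj => by
            rw [Function.update_of_ne (ne_of_mem_of_not_mem hj hi)]
            exact hx j (Finset.mem_insert_of_mem hj)
  rw [Measure.restrict_pi_pi, lintegral_eq_lmarginal_univ a, ← Finset.card_univ]
  exact hpartial Finset.univ a fun _ _ => rfl

end FubiniLowerBound

section EmpiricalMeasure

variable {X : Type*} [PseudoMetricSpace X] [MeasurableSpace X] [BorelSpace X]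

lemma emp_apply_le_emp_apply_thickening {s : ℕ} {a b : Fin s → X} {ρ : ℝ}
    (hab : ∀ j, dist (a j) (b j) < ρ) {B : Set X} (hB : MeasurableSet B) :
    emp a B ≤ emp b (Metric.thickening ρ B) := by
  have happly : ∀ (x : Fin s → X) {C : Set X}, MeasurableSet C →
      emp x C = (s : ℝ≥0∞)⁻¹ * ∑ j, C.indicator 1 (x j) := fun x C hC => by
    simp [emp, Measure.smul_apply, Measure.dirac_apply' _ hC]
  rw [happly a hB, happly b Metric.isOpen_thickening.measurableSet]
  gcongr with j
  by_cases hj : a j ∈ B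
  · have hbj : b j ∈ Metric.thickening ρ B :=
      Metric.mem_thickening_iff.mpr ⟨a j, hj, by rw [dist_comm]; exact hab j⟩
    simp [hj, hbj]
  · simp [hj]

lemma dist_empPM_le {s : ℕ} (hs : s ≠ 0) {a b : Fin s → X} {ρ : ℝ} (hρ : 0 ≤ ρ)
    (hab : ∀ j, dist (a j) (b j) < ρ) :
    dist (LevyProkhorov.ofMeasure (empPM hs a)) (LevyProkhorov.ofMeasure (empPM hs b)) ≤ ρ := by
  rw [LevyProkhorov.dist_probabilityMeasure_def]
  refine levyProkhorovDist_le_of_forall_le _ _ hρ fun ε B hε hB => ?_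
  calc emp a B ≤ emp b (Metric.thickening ρ B) := emp_apply_le_emp_apply_thickening hab hB
    _ ≤ emp b (Metric.thickening ε B) := measure_mono (Metric.thickening_mono hε.le B)
    _ ≤ emp b (Metric.thickening ε B) + ENNReal.ofReal ε := le_self_add

lemma exists_isOpen_forall_empPM_mem [SecondCountableTopology X] {μ : ProbabilityMeasure X}
    {G : Set (ProbabilityMeasure X)} (hG : IsOpen G) (hμ : μ ∈ G) :
    ∃ G' : Set (ProbabilityMeasure X), (IsOpen G' ∧ μ ∈ G') ∧ ∃ ρ > 0,
      ∀ (s : ℕ) (hs : s ≠ 0) (a b : Fin s → X), (∀ j, dist (a j) (b j) < ρ) →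
        empPM hs a ∈ G' → empPM hs b ∈ G := by
  obtain ⟨r, hr, hball⟩ := Metric.isOpen_iff.mp
    (hG.preimage LevyProkhorov.continuous_toMeasure_probabilityMeasure)
    (LevyProkhorov.ofMeasure μ) hμ
  refine ⟨LevyProkhorov.ofMeasure ⁻¹' Metric.ball (LevyProkhorov.ofMeasure μ) (r / 2),
    ⟨Metric.isOpen_ball.preimage LevyProkhorov.continuous_ofMeasure_probabilityMeasure,
      Metric.mem_ball_self (half_pos hr)⟩, r / 2, half_pos hr, fun s hs a b hab ha => ?_⟩
  suffices h : LevyProkhorov.ofMeasure (empPM hs b) ∈ Metric.ball (LevyProkhorov.ofMeasure μ) r from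
    hball h
  rw [Set.mem_preimage, Metric.mem_ball] at ha
  have hdist := dist_empPM_le hs (half_pos hr).le hab
  have htri := dist_triangle_left (LevyProkhorov.ofMeasure (empPM hs b))
    (LevyProkhorov.ofMeasure μ) (LevyProkhorov.ofMeasure (empPM hs a))
  rw [Metric.mem_ball]
  linarith

end EmpiricalMeasure

section LocalVandermonde

variable {n : ℕ} {H : Set (Pt n)} {ν : Measure H}

lemma DensityCond.exists_hasLowerDensity_map (hdens : DensityCond H ν) :
    ∃ T, ∀ z ∈ H, HasLowerDensity (ν.map Subtype.val) T z := by
  obtain ⟨T, -, hT⟩ := hdens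
  refine ⟨T, fun z hz => ?_⟩
  obtain ⟨r₀, hr₀, hball⟩ := hT ⟨z, hz⟩
  refine ⟨r₀, hr₀, fun r hr hr' => (hball r hr hr').trans_eq ?_⟩
  rw [Measure.map_apply measurable_subtype_coe Metric.isOpen_ball.measurableSet]
  rfl

lemma eventually_ofReal_exp_mul_abs_le_setLIntegral_subtype_ball (hHc : IsCompact H)
    (hH : Convex ℝ H) (hHint : (interior H).Nonempty) [IsFiniteMeasure ν]
    (hdens : DensityCond H ν) {ρ ε : ℝ} (hρ : 0 < ρ) (hε : 0 < ε) :
    ∀ᶠ d : ℕ in atTop, ∀ g : Pt n → ℝ, IsPolynomialOnLines d g → ∀ z : H,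
      ENNReal.ofReal (Real.exp (-(ε * d)) * |g z|) ≤
        ∫⁻ y in Metric.ball z ρ, ENNReal.ofReal |g y| ∂ν := by
  obtain ⟨T, hT⟩ := hdens.exists_hasLowerDensity_map
  filter_upwards [eventually_ofReal_exp_mul_abs_le_setLIntegral_ball hHc hH hHint hT hρ hε]
    with d hd g hg z
  have hmeas : Measurable fun y => ENNReal.ofReal |g y| :=
    (ENNReal.continuous_ofReal.comp hg.1.abs).measurable
  have hball : Subtype.val ⁻¹' (H ∩ Metric.ball (z : Pt n) ρ) = Metric.ball z ρ := by
    ext y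
    simp [Subtype.dist_eq]
  have hbound := hd g hg z z.2
  rwa [setLIntegral_map (hHc.measurableSet.inter Metric.isOpen_ball.measurableSet) hmeas
    measurable_subtype_coe, hball] at hbound

lemma eventually_ofReal_exp_mul_norm_sq_VDM_le_setLIntegral
    {E : ∀ d, Fin (sdim n d) → (Fin n → ℕ)} (hE : ∀ d, IsEnum n d (E d)) (hHc : IsCompact H)
    (hH : Convex ℝ H) (hHint : (interior H).Nonempty) [IsFiniteMeasure ν]
    (hdens : DensityCond H ν) {ρ ε : ℝ} (hρ : 0 < ρ) (hε : 0 < ε) :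
    ∀ᶠ d : ℕ in atTop, ∀ a : Fin (sdim n d) → H,
      ENNReal.ofReal (Real.exp (-(2 * ε * (d * sdim n d)))) *
          ENNReal.ofReal (‖VDM n d (E d) fun j => a j‖ ^ 2) ≤
        ∫⁻ b in Set.pi Set.univ fun j => Metric.ball (a j) ρ,
          ENNReal.ofReal (‖VDM n d (E d) fun j => b j‖ ^ 2) ∂(Measure.pi fun _ => ν) := by
  have hlocal := eventually_ofReal_exp_mul_abs_le_setLIntegral_subtype_ball hHc hH hHint hdens hρ hε
  filter_upwards [(tendsto_id.const_mul_atTop' two_pos).eventually hlocal] with d hd a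
  have hmeas : Measurable fun b : Fin (sdim n d) → H =>
      ENNReal.ofReal (‖VDM n d (E d) fun j => b j‖ ^ 2) :=
    (ENNReal.continuous_ofReal.comp
      (((continuous_VDM (E d)).comp (by fun_prop)).norm.pow 2)).measurable
  have hpi := pow_card_mul_le_setLIntegral_pi ν (fun j => Metric.ball (a j) ρ) hmeas
    (ENNReal.ofReal (Real.exp (-(2 * ε * d)))) a fun i x hx => by
      have h := hd _ ((hE d).isPolynomialOnLines_norm_sq_VDM_update (fun j => (x j : Pt n)) i) (a i)
      simp only [abs_sq] at h
      have hupdate : ∀ y : H, (fun j => (Function.update x i y j : Pt n)) =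
          Function.update (fun j => (x j : Pt n)) i y := Function.comp_update Subtype.val x i
      simp only [hupdate]
      rw [← ENNReal.ofReal_mul (Real.exp_pos _).le]
      refine le_trans (le_of_eq ?_) h
      rw [← hx, Function.update_eq_self]
      simp
      ring_nf
  convert hpi using 2
  rw [Fintype.card_fin, ← ENNReal.ofReal_pow (Real.exp_pos _).le, ← Real.exp_nat_mul]
  ring_nf

variable {d : ℕ} {E : Fin (sdim n d) → (Fin n → ℕ)}

lemma absVDMQ_sq (E : Fin (sdim n d) → (Fin n → ℕ)) (Q : H → ℝ) (a : Fin (sdim n d) → H) :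
    absVDMQ n d E H Q a ^ 2 = ENNReal.ofReal (Real.exp (-(2 * d * ∑ j, Q (a j)))) *
      ENNReal.ofReal (‖VDM n d E fun j => a j‖ ^ 2) := by
  rw [absVDMQ, ← ENNReal.ofReal_pow (by positivity), ← ENNReal.ofReal_mul (by positivity),
    ← Real.exp_sum, mul_pow, ← Real.exp_nat_mul, ← Finset.mul_sum, mul_comm]
  congr 3
  push_cast
  ring

lemma ofReal_exp_mul_absVDMQ_weight_le {s : ℕ} {Q : H → ℝ} {ε : ℝ} (d : ℕ) {a b : Fin s → H}
    (hab : ∀ j, Q (b j) ≤ Q (a j) + ε) :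
    ENNReal.ofReal (Real.exp (-(2 * ε * (d * s)))) *
        ENNReal.ofReal (Real.exp (-(2 * d * ∑ j, Q (a j)))) ≤
      ENNReal.ofReal (Real.exp (-(2 * d * ∑ j, Q (b j)))) := by
  have hsum : ∑ j, Q (b j) ≤ ∑ j, Q (a j) + s * ε := by
    calc ∑ j, Q (b j) ≤ ∑ j, (Q (a j) + ε) := Finset.sum_le_sum fun j _ => hab j
      _ = ∑ j, Q (a j) + s * ε := by simp [Finset.sum_add_distrib]
  rw [← ENNReal.ofReal_mul (Real.exp_pos _).le, ← Real.exp_add]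
  gcongr
  nlinarith [mul_le_mul_of_nonneg_left hsum (Nat.cast_nonneg (α := ℝ) d)]

lemma eventually_ofReal_exp_mul_absVDMQ_sq_le_setLIntegral
    {E : ∀ d, Fin (sdim n d) → (Fin n → ℕ)} (hE : ∀ d, IsEnum n d (E d)) (hHc : IsCompact H)
    (hH : Convex ℝ H) (hHint : (interior H).Nonempty) [IsFiniteMeasure ν]
    (hdens : DensityCond H ν) {Q : H → ℝ} (hQ : Continuous Q) {ρ ε : ℝ} (hρ : 0 < ρ)
    (hε : 0 < ε) :
    ∀ᶠ d : ℕ in atTop, ∀ a : Fin (sdim n d) → H,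
      ENNReal.ofReal (Real.exp (-(2 * ε * (d * sdim n d)))) * absVDMQ n d (E d) H Q a ^ 2 ≤
        ∫⁻ b in Set.pi Set.univ fun j => Metric.ball (a j) ρ,
          absVDMQ n d (E d) H Q b ^ 2 ∂(Measure.pi fun _ => ν) := by
  have := isCompact_iff_compactSpace.mp hHc
  obtain ⟨ρ', hρ', hQρ'⟩ := Metric.uniformContinuous_iff.mp
    (CompactSpace.uniformContinuous_of_continuous hQ) (ε / 2) (half_pos hε)
  filter_upwards [eventually_ofReal_exp_mul_norm_sq_VDM_le_setLIntegral hE hHc hH hHint hdens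
    (lt_min hρ hρ') (half_pos hε)] with d hd a
  set c := ENNReal.ofReal (Real.exp (-(2 * (ε / 2) * (d * sdim n d))))
  set w : (Fin (sdim n d) → H) → ℝ≥0∞ := fun b =>
    ENNReal.ofReal (Real.exp (-(2 * d * ∑ j, Q (b j))))
  have hcc : ENNReal.ofReal (Real.exp (-(2 * ε * (d * sdim n d)))) = c * c := by
    rw [← ENNReal.ofReal_mul (Real.exp_pos _).le, ← Real.exp_add]
    ring_nf
  set B := Set.pi Set.univ fun j => Metric.ball (a j) (min ρ ρ')
  have hB : MeasurableSet B := .univ_pi fun _ => Metric.isOpen_ball.measurableSet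
  have hweight : ∀ b ∈ B, c * w a ≤ w b := fun b hb =>
    ofReal_exp_mul_absVDMQ_weight_le d fun j => by
      have hdist := hQρ' ((Metric.mem_ball.mp (hb j trivial)).trans_le (min_le_right _ _))
      linarith [(abs_lt.mp hdist).2]
  calc ENNReal.ofReal (Real.exp (-(2 * ε * (d * sdim n d)))) * absVDMQ n d (E d) H Q a ^ 2
      = c * w a * (c * ENNReal.ofReal (‖VDM n d (E d) fun j => a j‖ ^ 2)) := by
        rw [hcc, absVDMQ_sq]; ring
    _ ≤ c * w a * ∫⁻ b in B, ENNReal.ofReal (‖VDM n d (E d) fun j => b j‖ ^ 2)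
          ∂(Measure.pi fun _ => ν) := by gcongr; exact hd a
    _ = ∫⁻ b in B, c * w a * ENNReal.ofReal (‖VDM n d (E d) fun j => b j‖ ^ 2)
          ∂(Measure.pi fun _ => ν) :=
        (lintegral_const_mul' _ _ (ENNReal.mul_ne_top ofReal_ne_top ofReal_ne_top)).symm
    _ ≤ ∫⁻ b in B, absVDMQ n d (E d) H Q b ^ 2 ∂(Measure.pi fun _ => ν) :=
        setLIntegral_mono' hB fun b hb => by
          rw [absVDMQ_sq]
          gcongr
          exact hweight b hb
    _ ≤ ∫⁻ b in Set.pi Set.univ fun j => Metric.ball (a j) ρ,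
          absVDMQ n d (E d) H Q b ^ 2 ∂(Measure.pi fun _ => ν) :=
        lintegral_mono_set (Set.pi_mono fun j _ => Metric.ball_subset_ball (min_le_left _ _))

end LocalVandermonde

section Comparison

lemma limsup_le_limsup_of_forall_exp_mul_le {u v : ℕ → ℝ≥0∞}
    (h : ∀ ε > 0, ∀ᶠ d in atTop, ENNReal.ofReal (Real.exp (-ε)) * u d ≤ v d) :
    limsup u atTop ≤ limsup v atTop := by
  have hε : ∀ ε > 0, ENNReal.ofReal (Real.exp (-ε)) * limsup u atTop ≤ limsup v atTop :=
    fun ε hε => by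
      rw [← ENNReal.limsup_const_mul_of_ne_top ofReal_ne_top]
      exact limsup_le_limsup (h ε hε)
  have hlim : Tendsto (fun ε : ℝ => ENNReal.ofReal (Real.exp (-ε)) * limsup u atTop) (𝓝[>] 0)
      (𝓝 (ENNReal.ofReal (Real.exp (-0)) * limsup u atTop)) := by
    refine ENNReal.Tendsto.mul_const ?_ (Or.inl (by simp))
    exact ((ENNReal.continuous_ofReal.comp (by fun_prop)).tendsto _).mono_left nhdsWithin_le_nhds
  rw [neg_zero, Real.exp_zero, ENNReal.ofReal_one, one_mul] at hlim
  exact le_of_tendsto hlim (eventually_mem_nhdsWithin.mono hε)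

lemma rpow_one_div_rpow_one_div_two_mul {x : ℝ≥0∞} {p : ℝ} (hp : 0 < p) :
    (x ^ 2) ^ (1 / (2 * p)) = x ^ (1 / p) := by
  rw [← ENNReal.rpow_natCast, ← ENNReal.rpow_mul]
  congr 1
  push_cast
  field_simp

lemma ofReal_exp_rpow_one_div {ε p : ℝ} (hp : 0 < p) :
    ENNReal.ofReal (Real.exp (-(ε * p))) ^ (1 / p) = ENNReal.ofReal (Real.exp (-ε)) := by
  rw [ENNReal.ofReal_rpow_of_pos (Real.exp_pos _), ← Real.exp_mul]
  congr 2
  field_simp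

variable {n : ℕ} {H : Set (Pt n)} {ν : Measure H} {Q : H → ℝ}

lemma mul_sdim_pos {d : ℕ} (n : ℕ) (hd : 0 < d) : (0 : ℝ) < d * sdim n d := by
  have := sdim_pos n d
  positivity

lemma absVDMQ_le_Wd_rpow {d : ℕ} (hd : 0 < d) (E : Fin (sdim n d) → (Fin n → ℕ))
    {G : Set (ProbabilityMeasure H)} {a : Fin (sdim n d) → H} (ha : a ∈ Gtilde d H G) :
    absVDMQ n d E H Q a ≤ Wd n d E H Q G ^ (d * sdim n d : ℝ) := by
  rw [← ENNReal.rpow_inv_le_iff (mul_sdim_pos n hd), ← one_div]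
  exact le_iSup₂ (f := fun a _ => absVDMQ n d E H Q a ^ (1 / (d * sdim n d : ℝ))) a ha

lemma Jd_le_measure_univ_rpow_mul_Wd [IsFiniteMeasure ν] {d : ℕ} (hd : 0 < d)
    (E : Fin (sdim n d) → (Fin n → ℕ)) (G : Set (ProbabilityMeasure H)) :
    Jd n d E H ν Q G ≤ ν Set.univ ^ (1 / (2 * d) : ℝ) * Wd n d E H Q G := by
  have hp := mul_sdim_pos n hd
  have hint : ∫⁻ a in Gtilde d H G, absVDMQ n d E H Q a ^ 2 ∂(Measure.pi fun _ => ν) ≤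
      (Wd n d E H Q G ^ (d * sdim n d : ℝ)) ^ 2 * ν Set.univ ^ sdim n d := by
    calc _ ≤ ∫⁻ _ in Gtilde d H G, (Wd n d E H Q G ^ (d * sdim n d : ℝ)) ^ 2
          ∂(Measure.pi fun _ => ν) :=
        setLIntegral_mono measurable_const fun a ha => by gcongr; exact absVDMQ_le_Wd_rpow hd E ha
      _ ≤ (Wd n d E H Q G ^ (d * sdim n d : ℝ)) ^ 2 * (Measure.pi fun _ => ν) Set.univ := by
        rw [setLIntegral_const]
        gcongr
        exact Set.subset_univ _
      _ = _ := by rw [Measure.pi_univ, Finset.prod_const, Finset.card_univ, Fintype.card_fin]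
  calc Jd n d E H ν Q G
      ≤ ((Wd n d E H Q G ^ (d * sdim n d : ℝ)) ^ 2 * ν Set.univ ^ sdim n d) ^
          (1 / (2 * (d * sdim n d)) : ℝ) := by
        rw [Jd, mul_assoc (2 : ℝ)]
        gcongr
    _ = ν Set.univ ^ (1 / (2 * d) : ℝ) * Wd n d E H Q G := by
        rw [ENNReal.mul_rpow_of_nonneg _ _ (by positivity), rpow_one_div_rpow_one_div_two_mul hp,
          one_div, ENNReal.rpow_rpow_inv hp.ne', mul_comm, ← ENNReal.rpow_natCast,
          ← ENNReal.rpow_mul]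
        congr 2
        have : (sdim n d : ℝ) ≠ 0 := by exact_mod_cast (sdim_pos n d).ne'
        field_simp

lemma eventually_ofReal_exp_mul_Jd_le_Wd (E : ∀ d, Fin (sdim n d) → (Fin n → ℕ))
    [IsFiniteMeasure ν] (G : Set (ProbabilityMeasure H)) {ε : ℝ} (hε : 0 < ε) :
    ∀ᶠ d in atTop, ENNReal.ofReal (Real.exp (-ε)) * Jd n d (E d) H ν Q G ≤
      Wd n d (E d) H Q G := by
  have hlim : Tendsto (fun d : ℕ => ENNReal.ofReal (Real.exp (ε * (2 * d)))) atTop (𝓝 ∞) :=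
    ENNReal.tendsto_ofReal_atTop.comp (Real.tendsto_exp_atTop.comp
      ((tendsto_natCast_atTop_atTop.const_mul_atTop two_pos).const_mul_atTop hε))
  filter_upwards [hlim.eventually_const_le (measure_lt_top ν Set.univ), eventually_gt_atTop 0]
    with d hν hd
  have hroot : ν Set.univ ^ (1 / (2 * d) : ℝ) ≤ ENNReal.ofReal (Real.exp ε) := by
    calc ν Set.univ ^ (1 / (2 * d) : ℝ)
        ≤ ENNReal.ofReal (Real.exp (ε * (2 * d))) ^ (1 / (2 * d) : ℝ) := by gcongr
      _ = ENNReal.ofReal (Real.exp ε) := by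
          simpa using ofReal_exp_rpow_one_div (ε := -ε) (p := 2 * d) (by positivity)
  calc ENNReal.ofReal (Real.exp (-ε)) * Jd n d (E d) H ν Q G
      ≤ ENNReal.ofReal (Real.exp (-ε)) *
          (ENNReal.ofReal (Real.exp ε) * Wd n d (E d) H Q G) := by
        gcongr
        exact (Jd_le_measure_univ_rpow_mul_Wd hd (E d) G).trans (by gcongr)
    _ = Wd n d (E d) H Q G := by
        rw [← mul_assoc, ← ENNReal.ofReal_mul (Real.exp_pos _).le, ← Real.exp_add, neg_add_cancel,
          Real.exp_zero, ENNReal.ofReal_one, one_mul]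

variable {E : ∀ d, Fin (sdim n d) → (Fin n → ℕ)}

lemma eventually_ofReal_exp_mul_Wd_le_Jd (hE : ∀ d, IsEnum n d (E d)) (hHc : IsCompact H)
    (hH : Convex ℝ H) (hHint : (interior H).Nonempty) [IsFiniteMeasure ν]
    (hdens : DensityCond H ν) (hQ : Continuous Q) {ρ : ℝ} (hρ : 0 < ρ)
    {G G' : Set (ProbabilityMeasure H)}
    (hG : ∀ (s : ℕ) (hs : s ≠ 0) (a b : Fin s → H), (∀ j, dist (a j) (b j) < ρ) →
      empPM hs a ∈ G' → empPM hs b ∈ G) {ε : ℝ} (hε : 0 < ε) :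
    ∀ᶠ d in atTop, ENNReal.ofReal (Real.exp (-ε)) * Wd n d (E d) H Q G' ≤
      Jd n d (E d) H ν Q G := by
  filter_upwards [eventually_ofReal_exp_mul_absVDMQ_sq_le_setLIntegral hE hHc hH hHint hdens hQ
    hρ hε, eventually_gt_atTop 0] with d hd hd0
  have hp := mul_sdim_pos n hd0
  rw [Wd]
  simp only [ENNReal.mul_iSup]
  refine iSup₂_le fun a ha => ?_
  have hsub : (Set.pi Set.univ fun j => Metric.ball (a j) ρ) ⊆ Gtilde d H G := fun b hb =>
    hG _ (sdim_pos n d).ne' a b (fun j => Metric.mem_ball'.mp (hb j trivial)) ha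
  calc ENNReal.ofReal (Real.exp (-ε)) * absVDMQ n d (E d) H Q a ^ (1 / (d * sdim n d) : ℝ)
      = (ENNReal.ofReal (Real.exp (-(2 * ε * (d * sdim n d)))) *
          absVDMQ n d (E d) H Q a ^ 2) ^ (1 / (2 * (d * sdim n d)) : ℝ) := by
        rw [ENNReal.mul_rpow_of_nonneg _ _ (by positivity), rpow_one_div_rpow_one_div_two_mul hp,
          show 2 * ε * (d * sdim n d) = ε * (2 * (d * sdim n d)) by ring,
          ofReal_exp_rpow_one_div (by positivity)]
    _ ≤ Jd n d (E d) H ν Q G := by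
        rw [Jd, mul_assoc (2 : ℝ) (d : ℝ)]
        gcongr
        exact (hd a).trans (lintegral_mono_set hsub)

lemma JQ_eq_WQ (hE : ∀ d, IsEnum n d (E d)) (hHc : IsCompact H) (hH : Convex ℝ H)
    (hHint : (interior H).Nonempty) [IsFiniteMeasure ν] (hdens : DensityCond H ν)
    (hQ : Continuous Q) (μ : ProbabilityMeasure H) : JQ n E H ν Q μ = WQ n E H Q μ := by
  apply le_antisymm
  · exact iInf₂_mono fun G _ => limsup_le_limsup_of_forall_exp_mul_le fun ε hε =>
      eventually_ofReal_exp_mul_Jd_le_Wd E G hε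
  · refine le_iInf₂ fun G hG => ?_
    obtain ⟨G', hG', ρ, hρ, hGG'⟩ := exists_isOpen_forall_empPM_mem hG.1 hG.2
    exact (iInf₂_le G' hG').trans (limsup_le_limsup_of_forall_exp_mul_le fun ε hε =>
      eventually_ofReal_exp_mul_Wd_le_Jd hE hHc hH hHint hdens hQ hρ hGG' hε)

end Comparison

theorem J_independent_of_nu_general {n : ℕ} {E : ∀ d, Fin (sdim n d) → (Fin n → ℕ)}
    (hE : ∀ d, IsEnum n d (E d)) {H : Set (Pt n)} (hHcomp : IsCompact H) (hHconv : Convex ℝ H)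
    (hHint : (interior H).Nonempty) (ν₁ ν₂ : Measure H) [IsFiniteMeasure ν₁] [IsFiniteMeasure ν₂]
    (hdens₁ : DensityCond H ν₁) (hdens₂ : DensityCond H ν₂) {Q : H → ℝ} (hQ : Continuous Q)
    (μ : ProbabilityMeasure H) :
    JQ n E H ν₁ Q μ = JQ n E H ν₂ Q μ ∧ JQ n E H ν₁ Q μ = WQ n E H Q μ := by
  have h₁ := JQ_eq_WQ hE hHcomp hHconv hHint hdens₁ hQ μ
  have h₂ := JQ_eq_WQ hE hHcomp hHconv hHint hdens₂ hQ μ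
  exact ⟨h₁.trans h₂.symm, h₁⟩

/-- **Remark (independence of `ν`).** Let `H ⊂ ℂⁿ` be a compact convex set with nonempty
interior and let `ν₁, ν₂` be positive Borel measures on `H` of total mass at most `1`, each
satisfying the density condition. Then for every `μ ∈ 𝓜(H)` the functional `J(μ)` computed
with `ν₁` equals the one computed with `ν₂`; both equal `W(μ)`, which does not involve `ν`. -/
theorem J_independent_of_nu
    (n : ℕ) (hn : 1 ≤ n)
    (E : ∀ d, Fin (sdim n d) → (Fin n → ℕ)) (hE : ∀ d, IsEnum n d (E d))
    (H : Set (Pt n)) (hHcomp : IsCompact H) (hHconv : Convex ℝ H)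
    (hHint : (interior H).Nonempty)
    (ν₁ ν₂ : Measure H) (hν₁ : ν₁ Set.univ ≤ 1) (hν₂ : ν₂ Set.univ ≤ 1)
    (hdens₁ : DensityCond H ν₁) (hdens₂ : DensityCond H ν₂)
    (μ : ProbabilityMeasure H) :
    JQ n E H ν₁ 0 μ = JQ n E H ν₂ 0 μ ∧ JQ n E H ν₁ 0 μ = WQ n E H 0 μ := by
  have : IsFiniteMeasure ν₁ := ⟨hν₁.trans_lt one_lt_top⟩
  have : IsFiniteMeasure ν₂ := ⟨hν₂.trans_lt one_lt_top⟩
  exact J_independent_of_nu_general hE hHcomp hHconv hHint ν₁ ν₂ hdens₁ hdens₂ continuous_zero μ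

end
end
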